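/- arXiv:2504.15851 — 2 statements merged into one kernel-verified Lean document; each statement's English description precedes it below -/
import Mathlib

section
/- Let x be a point such that the multiplier set M_p(x) is nonempty (i.e. x is a KKT stationary solution of NLP(p)). Then M_p(x) is bounded if and only if MFCQ holds at x. -/
/-!
Write `F`, `G i`, `H j` for the derivatives in `x` of the objective and the constraints. Since the
Lagrangian is affine in the multipliers, `M_p(x)` is a polyhedron: `(y, z)` belongs to it iff
`F + ∑ y i • G i + ∑ z j • H j = 0`, `0 ≤ z` and `z j = 0` for inactive `j` (`mem_multSet_iff`).

If MFCQ holds with direction `d`, evaluating stationarity at `d` kills the `G` terms and gives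
`∑ z j * (-H j d) = F d` with nonnegative summands, which bounds every `z j`. Then
`∑ y i • G i = -F - ∑ z j • H j` is bounded, and so is `y`, because the injective linear map
`y ↦ ∑ y i • G i` on a finite-dimensional space is antilipschitz.

Conversely, if `M_p(x)` is nonempty and bounded then it contains no ray, so its recession cone is
trivial (`recession_trivial`). A linear relation among the `G i` is a recession direction, and if no
MFCQ direction `d` exists, Motzkin's transposition theorem (`motzkin`) provides another one: it
separates the image under `H` of the common kernel of the `G i` from the open set of vectors with
negative active coordinates.
-/

open Filter Topology Set Matrix

attribute [local instance] Classical.propDecidable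

namespace SensNLP

variable {n l me mi : ℕ}
variable (f : (Fin n → ℝ) → (Fin l → ℝ) → ℝ)
  (g : (Fin n → ℝ) → (Fin l → ℝ) → Fin me → ℝ)
  (h : (Fin n → ℝ) → (Fin l → ℝ) → Fin mi → ℝ)
  (p : Fin l → ℝ) (x : Fin n → ℝ) (y : Fin me → ℝ) (z : Fin mi → ℝ)
  (hdir : Fin l → ℝ)

/-- The Lagrangian `L(x,y,z,p) = f(x,p) + yᵀ g(x,p) + zᵀ h(x,p)`. -/
noncomputable def Lag : ℝ :=
  f x p + ∑ i, y i * g x p i + ∑ j, z j * h x p j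

/-- The gradient (with respect to `x`) of a scalar function, as a vector. -/
noncomputable def gradx (φ : (Fin n → ℝ) → ℝ) (x : Fin n → ℝ) : Fin n → ℝ :=
  fun j => fderiv ℝ φ x (Pi.single j 1)

/-- The quadratic form `dᵀ ∇²φ(x) d` of the Hessian of a scalar function. -/
noncomputable def hessQ (φ : (Fin n → ℝ) → ℝ) (x d : Fin n → ℝ) : ℝ :=
  fderiv ℝ (fun x' => fderiv ℝ φ x' d) x d

/-- KKT conditions: stationarity of the Lagrangian in `x`, primal feasibility,
dual feasibility and complementarity. -/
def IsKKT : Prop :=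
  fderiv ℝ (fun x' => Lag f g h p x' y z) x = 0 ∧
  g x p = 0 ∧ h x p ≤ 0 ∧ 0 ≤ z ∧ ∑ j, z j * h x p j = 0

/-- The multiplier set `M_p(x)`. -/
def MultSet : Set ((Fin me → ℝ) × (Fin mi → ℝ)) :=
  {yz | IsKKT f g h p x yz.1 yz.2}

/-- LICQ: linear independence of the gradients of equality and active inequality
constraints. -/
def LICQ : Prop :=
  LinearIndependent ℝ
    (fun i : Fin me ⊕ {j : Fin mi // h x p j = 0} =>
      Sum.elim (fun i => gradx (fun x' => g x' p i) x)
        (fun j => gradx (fun x' => h x' p j.1) x) i)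

/-- MFCQ. -/
def MFCQ : Prop :=
  LinearIndependent ℝ (fun i : Fin me => gradx (fun x' => g x' p i) x) ∧
  ∃ d : Fin n → ℝ,
    (∀ i, fderiv ℝ (fun x' => g x' p i) x d = 0) ∧
    (∀ j, h x p j = 0 → fderiv ℝ (fun x' => h x' p j) x d < 0)

/-- SMFCQ (relative to a multiplier `z`). -/
def SMFCQ : Prop :=
  LinearIndependent ℝ
    (fun i : Fin me ⊕ {j : Fin mi // h x p j = 0 ∧ 0 < z j} =>
      Sum.elim (fun i => gradx (fun x' => g x' p i) x)
        (fun j => gradx (fun x' => h x' p j.1) x) i) ∧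
  ∃ d : Fin n → ℝ,
    (∀ i, fderiv ℝ (fun x' => g x' p i) x d = 0) ∧
    (∀ j, h x p j = 0 → 0 < z j → fderiv ℝ (fun x' => h x' p j) x d = 0) ∧
    (∀ j, h x p j = 0 → z j = 0 → fderiv ℝ (fun x' => h x' p j) x d < 0)

/-- CRCQ at `x` (for parameter `p`): every subfamily of gradients of equality
constraints and active inequality constraints has constant rank near `x`. -/
def CRCQ : Prop :=
  ∃ W ∈ 𝓝 x, ∀ (J : Finset (Fin me)) (I : Finset (Fin mi)),
    (∀ i ∈ I, h x p i = 0) →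
    ∃ r : ℕ, ∀ x' ∈ W,
      Module.finrank ℝ ↥(Submodule.span ℝ
        ((fun i => gradx (fun x'' => g x'' p i) x') '' ↑J ∪
         (fun i => gradx (fun x'' => h x'' p i) x') '' ↑I)) = r

/-- The critical cone `C_p(x)`. -/
def criticalCone : Set (Fin n → ℝ) :=
  {d | fderiv ℝ (fun x' => f x' p) x d ≤ 0 ∧
       (∀ i, fderiv ℝ (fun x' => g x' p i) x d = 0) ∧
       (∀ j, h x p j = 0 → fderiv ℝ (fun x' => h x' p j) x d ≤ 0)}

/-- The set `D_p(x;z)` used in the strong second-order sufficiency condition. -/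
def Dset : Set (Fin n → ℝ) :=
  {d | (∀ i, fderiv ℝ (fun x' => g x' p i) x d = 0) ∧
       (∀ j, h x p j = 0 → 0 < z j → fderiv ℝ (fun x' => h x' p j) x d = 0)}

/-- SOSC. -/
def SOSC : Prop :=
  ∃ yz ∈ MultSet f g h p x, ∀ d ∈ criticalCone f g h p x, d ≠ 0 →
    0 < hessQ (fun x' => Lag f g h p x' yz.1 yz.2) x d

/-- SSOSC. -/
def SSOSC : Prop :=
  ∃ yz ∈ MultSet f g h p x, ∀ d ∈ Dset g h p x yz.2, d ≠ 0 →
    0 < hessQ (fun x' => Lag f g h p x' yz.1 yz.2) x d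

/-- GSSOSC. -/
def GSSOSC : Prop :=
  ∀ yz ∈ MultSet f g h p x, ∀ d ∈ Dset g h p x yz.2, d ≠ 0 →
    0 < hessQ (fun x' => Lag f g h p x' yz.1 yz.2) x d

/-- Strict complementarity slackness: no weakly active constraint. -/
def SCS : Prop :=
  ∀ j, h x p j = 0 → z j ≠ 0

/-- `x` is a local solution (local minimizer) of NLP(p). -/
def IsLocalSol : Prop :=
  g x p = 0 ∧ h x p ≤ 0 ∧
  ∃ W ∈ 𝓝 x, ∀ x' ∈ W, g x' p = 0 → h x' p ≤ 0 → f x p ≤ f x' p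

/-- The directional critical set `K_p(x,z;h)`. -/
def Kset : Set (Fin n → ℝ) :=
  {d | (∀ i, fderiv ℝ (fun x' => g x' p i) x d
          + fderiv ℝ (fun p' => g x p' i) p hdir = 0) ∧
       (∀ j, h x p j = 0 → 0 < z j →
          fderiv ℝ (fun x' => h x' p j) x d
          + fderiv ℝ (fun p' => h x p' j) p hdir = 0) ∧
       (∀ j, h x p j = 0 → z j = 0 →
          fderiv ℝ (fun x' => h x' p j) x d
          + fderiv ℝ (fun p' => h x p' j) p hdir ≤ 0)}

/-- The objective of the sensitivity QP:
`½ dᵀ ∇²ₓₓL d + hᵀ ∇²ₚₓL d`. -/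
noncomputable def QPobj (d : Fin n → ℝ) : ℝ :=
  (1 / 2) * hessQ (fun x' => Lag f g h p x' y z) x d +
    fderiv ℝ (fun p' => fderiv ℝ (fun x'' => Lag f g h p' x'' y z) x d) p hdir

/-- The set `S_p(x;h)` of multipliers maximizing the linear functional
`(y,z) ↦ yᵀ (J_p g) h + zᵀ (J_p h) h` over `M_p(x)`. -/
def Sset : Set ((Fin me → ℝ) × (Fin mi → ℝ)) :=
  {yz ∈ MultSet f g h p x | ∀ yz' ∈ MultSet f g h p x,
    (∑ i, yz'.1 i * fderiv ℝ (fun p' => g x p' i) p hdir) +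
      (∑ j, yz'.2 j * fderiv ℝ (fun p' => h x p' j) p hdir) ≤
    (∑ i, yz.1 i * fderiv ℝ (fun p' => g x p' i) p hdir) +
      (∑ j, yz.2 j * fderiv ℝ (fun p' => h x p' j) p hdir)}

/-- A `PC¹` (piecewise continuously differentiable) function at a point. -/
def PC1At {N' : ℕ} (F : (Fin l → ℝ) → (Fin N' → ℝ)) (p : Fin l → ℝ) : Prop :=
  ∃ N ∈ 𝓝 p, ∃ k : ℕ, ∃ Fs : Fin k → (Fin l → ℝ) → (Fin N' → ℝ),
    ContinuousOn F N ∧ (∀ i, ContDiffOn ℝ 1 (Fs i) N) ∧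
    ∀ q ∈ N, ∃ i, F q = Fs i q

/-- A piecewise linear (continuous selection of finitely many linear maps) function. -/
def IsPiecewiseLinear {N' : ℕ} (D : (Fin l → ℝ) → (Fin N' → ℝ)) : Prop :=
  Continuous D ∧ ∃ k : ℕ, ∃ T : Fin k → (Fin l → ℝ) →ₗ[ℝ] (Fin N' → ℝ),
    ∀ v, ∃ i, D v = T i v


/-! ### A theorem of the alternative -/

/-- **Motzkin's transposition theorem**: if no `d` satisfies `G i d = 0` for all `i` and `H j d < 0`
for all `j` with `A j`, then some nontrivial combination of the `G i` and `H j` vanishes, with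
coefficients of the `H j` nonnegative and supported on `A`. -/
theorem motzkin {E : Type*} [AddCommGroup E] [Module ℝ E] {a b : ℕ}
    (G : Fin a → E →ₗ[ℝ] ℝ) (H : Fin b → E →ₗ[ℝ] ℝ) (A : Fin b → Prop)
    (hno : ¬ ∃ d : E, (∀ i, G i d = 0) ∧ ∀ j, A j → H j d < 0) :
    ∃ (c : Fin a → ℝ) (w : Fin b → ℝ), 0 ≤ w ∧ (∀ j, ¬ A j → w j = 0) ∧ w ≠ 0 ∧
      ∑ i, c i • G i + ∑ j, w j • H j = 0 := by
  let K : Submodule ℝ E := ⨅ i, LinearMap.ker (G i)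
  let T : Submodule ℝ (Fin b → ℝ) := K.map (LinearMap.pi H)
  let S : Set (Fin b → ℝ) := {v | ∀ j, A j → v j < 0}
  have hSconv : Convex ℝ S := by
    intro u hu v hv s t hs ht hst j hj
    have h1 := hu j hj
    have h2 := hv j hj
    simp only [Pi.add_apply, Pi.smul_apply, smul_eq_mul]
    rcases hs.eq_or_lt with rfl | hs
    · have : t = 1 := by linarith
      subst this; linarith
    · nlinarith
  have hSopen : IsOpen S := by
    have : S = ⋂ j, {v | A j → v j < 0} := by ext; simp [S]
    rw [this]
    refine isOpen_iInter_of_finite fun j => ?_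
    by_cases hj : A j
    · simpa [hj] using isOpen_lt (continuous_apply j) continuous_const
    · simp [hj]
  have hdisj : Disjoint S (T : Set (Fin b → ℝ)) := by
    rw [Set.disjoint_left]
    rintro v hv ⟨d, hd, rfl⟩
    refine hno ⟨d, fun i => ?_, fun j hj => hv j hj⟩
    have hd' : ∀ i, d ∈ LinearMap.ker (G i) := by simpa [K] using hd
    exact hd' i
  obtain ⟨φ, u, hS, hT⟩ := geometric_hahn_banach_open hSconv hSopen T.convex hdisj
  have hu : u ≤ 0 := by simpa using hT 0 T.zero_mem
  -- A functional bounded below on a subspace vanishes on it.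
  have hT0 : ∀ v ∈ T, φ v = 0 := by
    intro v hv
    by_contra hne
    have := hT (((u - 1) / φ v) • v) (T.smul_mem _ hv)
    rw [map_smul, smul_eq_mul, div_mul_cancel₀ _ hne] at this
    linarith
  -- For such `v`, `S` contains the whole ray from the constant vector `-1` in direction `v`.
  have hray : ∀ v : Fin b → ℝ, (∀ j, A j → v j ≤ 0) → φ v ≤ 0 := by
    intro v hv
    by_contra! hpos
    have hm : (fun _ => -1 : Fin b → ℝ) + ((-φ (fun _ => -1)) / φ v) • v ∈ S := by
      have h1 : φ (fun _ => -1) < 0 := (hS _ (fun j _ => by norm_num)).trans_le hu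
      intro j hj
      have h2 : (-φ (fun _ => -1)) / φ v * v j ≤ 0 :=
        mul_nonpos_of_nonneg_of_nonpos (div_nonneg (by linarith) hpos.le) (hv j hj)
      simp only [Pi.add_apply, Pi.smul_apply, smul_eq_mul]
      linarith
    have := (hS _ hm).trans_le hu
    rw [map_add, map_smul, smul_eq_mul, div_mul_cancel₀ _ hpos.ne'] at this
    linarith
  let w : Fin b → ℝ := fun j => φ (Pi.single j 1)
  have hφ : ∀ v, φ v = ∑ j, w j * v j := by
    intro v
    conv_lhs => rw [pi_eq_sum_univ' v]
    rw [map_sum]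
    refine Finset.sum_congr rfl fun j _ => ?_
    rw [map_smul, smul_eq_mul, mul_comm]
  have hneg : ∀ j, -w j ≤ 0 := by
    intro j
    rw [show -w j = φ (-Pi.single j 1) by simp [w]]
    refine hray _ fun k _ => ?_
    by_cases hk : k = j
    · subst hk; simp
    · simp [Pi.single_eq_of_ne hk]
  have hw0 : 0 ≤ w := fun j => by simpa using hneg j
  have hsupp : ∀ j, ¬ A j → w j = 0 := by
    intro j hj
    refine le_antisymm (hray _ fun k hk => ?_) (hw0 j)
    have : k ≠ j := by rintro rfl; exact hj hk
    simp [Pi.single_eq_of_ne this]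
  have hwne : w ≠ 0 := by
    intro hw
    have h1 : φ (fun _ => -1) < 0 := (hS _ (fun j _ => by norm_num)).trans_le hu
    rw [hφ, hw] at h1
    simp at h1
  have hmem : ∑ j, w j • H j ∈ Submodule.span ℝ (Set.range G) := by
    refine mem_span_of_iInf_ker_le_ker fun d hd => ?_
    have := hT0 (LinearMap.pi H d) ⟨d, hd, rfl⟩
    rw [hφ] at this
    simpa using this
  obtain ⟨c, hc⟩ := (Submodule.mem_span_range_iff_exists_fun ℝ).1 hmem
  refine ⟨-c, w, hw0, hsupp, hwne, ?_⟩
  rw [← hc, ← Finset.sum_add_distrib]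
  refine Finset.sum_eq_zero fun i _ => ?_
  ext v
  simp

theorem eq_zero_of_bounded_ray {a b C : ℝ} (hC : ∀ t : ℝ, 0 ≤ t → |a + t * b| ≤ C) : b = 0 := by
  by_contra hb
  have hb' : 0 < |b| := abs_pos.2 hb
  have h0 := hC 0 le_rfl
  have hC0 : 0 ≤ C := (abs_nonneg _).trans h0
  have h1 := hC ((2 * C + 1) / |b|) (by positivity)
  have h2 : |(2 * C + 1) / |b| * b| = 2 * C + 1 := by
    rw [abs_mul, abs_div, abs_abs, div_mul_cancel₀ _ hb'.ne', abs_of_nonneg (by linarith)]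
  have h3 := abs_sub (a + (2 * C + 1) / |b| * b) a
  rw [add_sub_cancel_left, h2] at h3
  simp only [zero_mul, add_zero] at h0
  linarith

/-! ### Polyhedral description of the multiplier set -/

theorem differentiable_slice {φ : (Fin n → ℝ) → (Fin l → ℝ) → ℝ}
    (hφ : ContDiff ℝ 2 fun q : (Fin n → ℝ) × (Fin l → ℝ) => φ q.1 q.2) (p : Fin l → ℝ) :
    Differentiable ℝ fun x' => φ x' p :=
  (hφ.differentiable (by norm_num)).comp (f := fun x' : Fin n → ℝ => (x', p)) (by fun_prop)

theorem fderiv_lag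
    (hf : DifferentiableAt ℝ (fun x' => f x' p) x)
    (hg : ∀ i, DifferentiableAt ℝ (fun x' => g x' p i) x)
    (hh : ∀ j, DifferentiableAt ℝ (fun x' => h x' p j) x) :
    fderiv ℝ (fun x' => Lag f g h p x' y z) x =
      fderiv ℝ (fun x' => f x' p) x + ∑ i, y i • fderiv ℝ (fun x' => g x' p i) x +
        ∑ j, z j • fderiv ℝ (fun x' => h x' p j) x := by
  have h1 := HasFDerivAt.fun_sum (u := Finset.univ)
    fun i _ => ((hg i).hasFDerivAt.const_mul (y i))
  have h2 := HasFDerivAt.fun_sum (u := Finset.univ)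
    fun j _ => ((hh j).hasFDerivAt.const_mul (z j))
  exact ((hf.hasFDerivAt.add h1).add h2).fderiv

/-- Evaluation on the standard basis is an injective linear map, so gradients and derivatives
satisfy the same linear relations. -/
theorem linearIndependent_gradx_iff {a : ℕ} (φ : Fin a → (Fin n → ℝ) → ℝ) :
    LinearIndependent ℝ (fun i => gradx (φ i) x) ↔
      LinearIndependent ℝ (fun i => fderiv ℝ (φ i) x) := by
  let T : ((Fin n → ℝ) →L[ℝ] ℝ) →ₗ[ℝ] (Fin n → ℝ) :=
    { toFun := fun L j => L (Pi.single j 1)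
      map_add' := fun _ _ => rfl
      map_smul' := fun _ _ => rfl }
  have hT : LinearMap.ker T = ⊥ := by
    rw [LinearMap.ker_eq_bot]
    intro L M hLM
    ext v
    rw [pi_eq_sum_univ' v, map_sum, map_sum]
    refine Finset.sum_congr rfl fun j _ => ?_
    rw [map_smul, map_smul]
    exact congrArg _ (congrFun hLM j)
  exact T.linearIndependent_iff hT

/-- Polyhedral description of `M_p(x)` at a feasible point: complementarity decouples into the
vanishing of `z` on inactive indices, since all terms `z j * h x p j` have the same sign. -/
theorem mem_multSet_iff
    (hf : DifferentiableAt ℝ (fun x' => f x' p) x)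
    (hg : ∀ i, DifferentiableAt ℝ (fun x' => g x' p i) x)
    (hh : ∀ j, DifferentiableAt ℝ (fun x' => h x' p j) x)
    (hgx : g x p = 0) (hhx : h x p ≤ 0) :
    (y, z) ∈ MultSet f g h p x ↔
      fderiv ℝ (fun x' => f x' p) x + ∑ i, y i • fderiv ℝ (fun x' => g x' p i) x +
        ∑ j, z j • fderiv ℝ (fun x' => h x' p j) x = 0 ∧
      0 ≤ z ∧ ∀ j, h x p j ≠ 0 → z j = 0 := by
  simp only [MultSet, IsKKT, Set.mem_ofPred_eq, fderiv_lag f g h p x y z hf hg hh]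
  constructor
  · rintro ⟨h1, -, -, h4, h5⟩
    refine ⟨h1, h4, fun j hj => ?_⟩
    have := (Finset.sum_eq_zero_iff_of_nonpos fun j _ =>
      mul_nonpos_of_nonneg_of_nonpos (h4 j) (hhx j)).1 h5 j (Finset.mem_univ j)
    exact (mul_eq_zero.1 this).resolve_right hj
  · rintro ⟨h1, h4, h5⟩
    refine ⟨h1, hgx, hhx, h4, Finset.sum_eq_zero fun j _ => ?_⟩
    by_cases hj : h x p j = 0
    · rw [hj, mul_zero]
    · rw [h5 j hj, zero_mul]

/-! ### Boundedness of polyhedra of multipliers -/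

/-- A nonempty bounded polyhedron `{(y, z) | F + ∑ y i • G i + ∑ z j • H j = 0, 0 ≤ z,
z j = 0 off A}` has trivial recession cone. -/
theorem recession_trivial {V : Type*} [AddCommGroup V] [Module ℝ V] {a b : ℕ}
    {M : Set ((Fin a → ℝ) × (Fin b → ℝ))} {F : V} {G : Fin a → V} {H : Fin b → V}
    {A : Fin b → Prop}
    (hM : ∀ y z, (y, z) ∈ M ↔ F + ∑ i, y i • G i + ∑ j, z j • H j = 0 ∧ 0 ≤ z ∧
      ∀ j, ¬ A j → z j = 0)
    (hne : M.Nonempty) (hbdd : Bornology.IsBounded M) {c : Fin a → ℝ} {w : Fin b → ℝ}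
    (hw : 0 ≤ w) (hwA : ∀ j, ¬ A j → w j = 0) (hcw : ∑ i, c i • G i + ∑ j, w j • H j = 0) :
    c = 0 ∧ w = 0 := by
  obtain ⟨⟨y, z⟩, hyz⟩ := hne
  obtain ⟨C, hC⟩ := hbdd.exists_norm_le
  obtain ⟨h1, h2, h3⟩ := (hM y z).1 hyz
  have key : ∀ t : ℝ, 0 ≤ t → ‖(y + t • c, z + t • w)‖ ≤ C := by
    intro t ht
    refine hC _ ((hM _ _).2 ⟨?_, add_nonneg h2 (smul_nonneg ht hw), fun j hj => ?_⟩)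
    · have : F + ∑ i, (y + t • c) i • G i + ∑ j, (z + t • w) j • H j =
          (F + ∑ i, y i • G i + ∑ j, z j • H j) +
            t • (∑ i, c i • G i + ∑ j, w j • H j) := by
        simp only [Pi.add_apply, Pi.smul_apply, smul_eq_mul, add_smul, mul_smul,
          Finset.sum_add_distrib, smul_add, Finset.smul_sum]
        abel
      rw [this, h1, hcw, smul_zero, add_zero]
    · simp [h3 j hj, hwA j hj]
  constructor
  · funext i
    exact eq_zero_of_bounded_ray (a := y i) (C := C) fun t ht =>
      ((norm_le_pi_norm (y + t • c) i).trans (norm_fst_le (y + t • c, z + t • w))).trans (key t ht)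
  · funext j
    exact eq_zero_of_bounded_ray (a := z j) (C := C) fun t ht =>
      ((norm_le_pi_norm (z + t • w) j).trans (norm_snd_le (y + t • c, z + t • w))).trans (key t ht)

/-- A Mangasarian-Fromovitz direction `d` bounds the multipliers: `F d = ∑ z j * (-H j d)` bounds
`z`, and linear independence of `G` then bounds `y`. -/
theorem isBounded_of_direction {E : Type*} [NormedAddCommGroup E] [NormedSpace ℝ E]
    {a b : ℕ} {M : Set ((Fin a → ℝ) × (Fin b → ℝ))} {F : E →L[ℝ] ℝ} {G : Fin a → E →L[ℝ] ℝ}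
    {H : Fin b → E →L[ℝ] ℝ} {A : Fin b → Prop}
    (hM : ∀ y z, (y, z) ∈ M → F + ∑ i, y i • G i + ∑ j, z j • H j = 0 ∧ 0 ≤ z ∧
      ∀ j, ¬ A j → z j = 0)
    (hG : LinearIndependent ℝ G) {d : E} (hGd : ∀ i, G i d = 0) (hHd : ∀ j, A j → H j d < 0) :
    Bornology.IsBounded M := by
  -- For `j` outside `A` the left side is `0`, so it is harmless that `H j d` may vanish there.
  have hz : ∀ y z, (y, z) ∈ M → ∀ j, |z j| ≤ |F d / H j d| := by
    intro y z hyz j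
    obtain ⟨h1, h2, h3⟩ := hM y z hyz
    by_cases hj : A j
    · have h4 : F d + ∑ k, z k * H k d = 0 := by
        have := congrArg (fun L : E →L[ℝ] ℝ => L d) h1
        simpa [hGd] using this
      have h5 : z j * (-H j d) ≤ ∑ k, z k * (-H k d) := by
        refine Finset.single_le_sum (f := fun k => z k * (-H k d)) (fun k _ => ?_)
          (Finset.mem_univ j)
        by_cases hk : A k
        · exact mul_nonneg (h2 k) (by linarith [hHd k hk])
        · simp [h3 k hk]
      simp only [mul_neg, Finset.sum_neg_distrib] at h5
      have h6 := hHd j hj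
      have h7 : 0 ≤ z j := h2 j
      rw [abs_div, le_div_iff₀ (abs_pos.2 h6.ne), abs_of_nonneg h7, abs_of_neg h6]
      exact le_trans (by linarith) (le_abs_self _)
    · simp [h3 j hj]
  let B : ℝ := ‖F‖ + ∑ j, |F d / H j d| * ‖H j‖
  let Φ : (Fin a → ℝ) →ₗ[ℝ] (E →L[ℝ] ℝ) := Fintype.linearCombination ℝ G
  have hΦ : ∀ y z, (y, z) ∈ M → ‖Φ y‖ ≤ B := by
    intro y z hyz
    have h1 := (hM y z hyz).1
    have h2 : Φ y = -(F + ∑ j, z j • H j) := by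
      rw [eq_neg_iff_add_eq_zero, ← h1, Fintype.linearCombination_apply]
      abel
    rw [h2, norm_neg]
    refine (norm_add_le _ _).trans (add_le_add le_rfl ((norm_sum_le _ _).trans ?_))
    refine Finset.sum_le_sum fun j _ => ?_
    rw [norm_smul]
    exact mul_le_mul_of_nonneg_right (hz y z hyz j) (norm_nonneg _)
  have hker : LinearMap.ker Φ = ⊥ :=
    LinearMap.ker_eq_bot.2 (linearIndependent_iff_injective_fintypeLinearCombination.1 hG)
  obtain ⟨K, -, hK⟩ := Φ.exists_antilipschitzWith hker
  refine (isBounded_iff_forall_norm_le.2 ⟨max (K * B) (∑ j, |F d / H j d|), ?_⟩)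
  rintro ⟨y, z⟩ hyz
  refine max_le_max ?_ ?_
  · exact (ZeroHomClass.bound_of_antilipschitz Φ hK y).trans
      (mul_le_mul_of_nonneg_left (hΦ y z hyz) K.2)
  · refine (pi_norm_le_iff_of_nonneg (Finset.sum_nonneg fun _ _ => abs_nonneg _)).2 fun j => ?_
    exact (hz y z hyz j).trans (Finset.single_le_sum (f := fun j => |F d / H j d|)
      (fun _ _ => abs_nonneg _) (Finset.mem_univ j))

/-! ### Equivalence with MFCQ -/

/-- **Gauvin.** At a KKT stationary solution, the multiplier set is
bounded if and only if MFCQ holds. -/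
theorem multiplier_set_bounded_iff_MFCQ
    (hf : ContDiff ℝ 2 fun q : (Fin n → ℝ) × (Fin l → ℝ) => f q.1 q.2)
    (hg : ∀ i : Fin me, ContDiff ℝ 2 fun q : (Fin n → ℝ) × (Fin l → ℝ) => g q.1 q.2 i)
    (hh : ∀ j : Fin mi, ContDiff ℝ 2 fun q : (Fin n → ℝ) × (Fin l → ℝ) => h q.1 q.2 j)
    (hstat : (MultSet f g h p x).Nonempty) :
    Bornology.IsBounded (MultSet f g h p x) ↔ MFCQ g h p x := by
  have hf' := differentiable_slice hf p x
  have hg' := fun i => differentiable_slice (φ := fun x' p' => g x' p' i) (hg i) p x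
  have hh' := fun j => differentiable_slice (φ := fun x' p' => h x' p' j) (hh j) p x
  have hfeas : g x p = 0 ∧ h x p ≤ 0 := by
    obtain ⟨_, _, h2, h3, _⟩ := hstat
    exact ⟨h2, h3⟩
  have hM := fun y z => mem_multSet_iff f g h p x y z hf' hg' hh' hfeas.1 hfeas.2
  rw [MFCQ, linearIndependent_gradx_iff x fun i x' => g x' p i]
  constructor
  · intro hbdd
    have hrec := fun c w => recession_trivial (A := fun j => h x p j = 0) hM hstat hbdd
      (c := c) (w := w)
    constructor
    · rw [Fintype.linearIndependent_iff]
      intro c hc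
      exact congrFun (hrec c 0 le_rfl (fun _ _ => rfl) (by simpa using hc)).1
    · by_contra hno
      obtain ⟨c, w, hw, hwA, hwne, hcw⟩ := motzkin
        (fun i => (fderiv ℝ (fun x' => g x' p i) x : (Fin n → ℝ) →ₗ[ℝ] ℝ))
        (fun j => (fderiv ℝ (fun x' => h x' p j) x : (Fin n → ℝ) →ₗ[ℝ] ℝ))
        (fun j => h x p j = 0) hno
      refine hwne (hrec c w hw hwA ?_).2
      ext1 v
      simpa using congrArg (fun L : (Fin n → ℝ) →ₗ[ℝ] ℝ => L v) hcw
  · rintro ⟨hG, d, hGd, hHd⟩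
    exact isBounded_of_direction (A := fun j => h x p j = 0) (fun y z => (hM y z).1) hG hGd hHd

end SensNLP
end

section
/- (Kojima) Suppose x* is a KKT stationary solution of NLP(p*) at which MFCQ and GSSOSC hold. Then there exist open neighborhoods U of p* and V of x* and a continuous function x : U → V such that for each p ∈ U, x(p) is the unique local solution of NLP(p) in V, and MFCQ holds at x(p). -/
/-!
Near `xs`, a KKT point strictly beats every other nearby feasible point of the same program
(`eventually_kkt_strict`). Otherwise there are parameters `p → ps`, KKT points `x → xs` with
multipliers `λ`, and feasible points `x' → xs`, `x' ≠ x`, with `f x' p ≤ f x p`. MFCQ keeps the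
multipliers bounded, so along an ultrafilter `λ → (y, z) ∈ M_ps(xs)` and `(x' - x) / ‖x' - x‖ → d`.
First-order expansions, together with complementarity and stationarity, put `d` in `D_ps(xs; z)`.
On the other hand `L(x', λ) ≤ f x' p ≤ f x p = L(x, λ)` and `∇L(x, λ) = 0`, so a second-order
expansion with moving base point gives `dᵀ ∇²L d ≤ 0`, contradicting GSSOSC.

Uniqueness follows: two KKT points in a small ball would each strictly beat the other, and local
solutions are KKT points because MFCQ persists near `(xs, ps)` (`eventually_mfcq`,
`IsLocalSol.exists_kkt`).

For existence (`eventually_exists_localSol`), one minimises over the feasible part of a closed ball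
around `xs`. The minimiser avoids the sphere because `xs` is strictly better than every feasible
point there, because this strict inequality survives small perturbations by compactness, and because
perturbed programs still have feasible points close to `xs` (`eventually_exists_feasible`).

For continuity, any limit of `x(q)` as `q → p` is a KKT point at `p`, since multipliers converge
and the KKT graph is closed (`exists_multiplier_limit`); by uniqueness it is `x(p)`.

MFCQ is used mostly through its dual form, positive linear independence of the gradients
(`mfcq_iff_dual`), which comes from Motzkin's alternative. Uniformity of this form near `(xs, ps)`
(`uniform_dual`) gives both the persistence of MFCQ and the bound on multipliers.
-/

open Filter Topology Set Matrix

attribute [local instance] Classical.propDecidable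

namespace SensNLP

variable {n l me mi : ℕ}
variable (f : (Fin n → ℝ) → (Fin l → ℝ) → ℝ)
  (g : (Fin n → ℝ) → (Fin l → ℝ) → Fin me → ℝ)
  (h : (Fin n → ℝ) → (Fin l → ℝ) → Fin mi → ℝ)
  (p : Fin l → ℝ) (x : Fin n → ℝ) (y : Fin me → ℝ) (z : Fin mi → ℝ)
  (hdir : Fin l → ℝ)

/-! ### A theorem of the alternative; curves in level sets -/

/-- **Motzkin's alternative.** If no `d` solves `b d = 0`, `a d < 0`, then some nonzero nonnegative
combination of the `a j` lies in the span of the `b i`. The values of `a` on the common kernel of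
the `b i` form a subspace missing the open negative orthant; a separating
functional supplies the coefficients. -/
lemma motzkin_s8 {E ι κ : Type*} [NormedAddCommGroup E] [NormedSpace ℝ E] [Fintype ι] [Fintype κ]
    (a : ι → E →L[ℝ] ℝ) (b : κ → E →L[ℝ] ℝ)
    (hno : ¬ ∃ d, (∀ i, b i d = 0) ∧ ∀ j, a j d < 0) :
    ∃ (μ : ι → ℝ) (ν : κ → ℝ), 0 ≤ μ ∧ μ ≠ 0 ∧ ∑ i, ν i • b i + ∑ j, μ j • a j = 0 := by
  classical
  let s : Set (ι → ℝ) := {v | ∀ j, v j < 0}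
  let K : Submodule ℝ E := ⨅ i, LinearMap.ker (b i : E →ₗ[ℝ] ℝ)
  let A : E →ₗ[ℝ] (ι → ℝ) := LinearMap.pi fun j => (a j : E →ₗ[ℝ] ℝ)
  have hK : ∀ d, d ∈ K ↔ ∀ i, b i d = 0 := by
    intro d; simp [K, Submodule.mem_iInf]
  have hs1 : Convex ℝ s := by
    have : s = ⋂ j, {v : ι → ℝ | v j < 0} := by ext v; simp [s]
    rw [this]
    exact convex_iInter fun j => convex_halfSpace_lt (LinearMap.proj (R := ℝ) j).isLinear 0
  have hs2 : IsOpen s := by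
    have : s = ⋂ j, {v : ι → ℝ | v j < 0} := by ext v; simp [s]
    rw [this]
    exact isOpen_iInter_of_finite fun j => isOpen_lt (continuous_apply j) continuous_const
  have hdisj : Disjoint s ((K.map A : Submodule ℝ (ι → ℝ)) : Set (ι → ℝ)) := by
    rw [Set.disjoint_left]
    rintro v hv ⟨d, hd, rfl⟩
    exact hno ⟨d, (hK d).1 hd, fun j => hv j⟩
  obtain ⟨F, u, hFs, hFt⟩ := geometric_hahn_banach_open hs1 hs2 (K.map A).convex hdisj
  have hu : u ≤ 0 := by simpa using hFt 0 (Submodule.zero_mem _)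
  have hF0 : ∀ v ∈ K.map A, F v = 0 := by
    intro v hv
    have h1 : ∀ c : ℝ, u ≤ c * F v := fun c => by
      simpa using hFt (c • v) (Submodule.smul_mem _ c hv)
    by_contra hne
    have := h1 ((u - 1) / F v)
    rw [div_mul_cancel₀ _ hne] at this
    linarith
  have hFsum : ∀ v, F v = ∑ j, v j * F (Pi.single j 1) := by
    intro v
    conv_lhs => rw [pi_eq_sum_univ' v]
    simp [map_sum]
  have hneg : ∀ v ∈ s, F v < 0 := fun v hv => (hFs v hv).trans_le hu
  have hnonneg : ∀ j, 0 ≤ F (Pi.single j 1) := by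
    intro j
    have hcl : ∀ ε : ℝ, 0 < ε → F (-Pi.single j 1 - ε • 1) ≤ 0 := fun ε hε =>
      (hneg _ fun i => by
        have : (0 : ℝ) ≤ (Pi.single j 1 : ι → ℝ) i := by
          by_cases hij : i = j
          · subst hij; simp
          · simp [hij]
        simp; linarith).le
    have hlim : Tendsto (fun ε : ℝ => F (-Pi.single j 1 - ε • 1)) (𝓝[>] 0)
        (𝓝 (F (-Pi.single j 1 - (0 : ℝ) • 1))) := by
      apply Tendsto.mono_left _ nhdsWithin_le_nhds
      apply Continuous.tendsto
      fun_prop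
    have := le_of_tendsto hlim (eventually_nhdsWithin_of_forall fun ε hε => hcl ε hε)
    simpa using this
  have hne : (fun j => F (Pi.single j 1)) ≠ 0 := by
    intro h0
    have := hneg (-1) fun j => by simp
    rw [hFsum] at this
    simp [fun j => congrFun h0 j] at this
  have hker : K ≤ LinearMap.ker (∑ j, F (Pi.single j 1) • (a j : E →ₗ[ℝ] ℝ)) := by
    intro d hd
    have := hF0 (A d) ⟨d, hd, rfl⟩
    rw [hFsum] at this
    simp only [LinearMap.mem_ker, LinearMap.sum_apply, LinearMap.smul_apply, smul_eq_mul]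
    rw [← this]
    exact Finset.sum_congr rfl fun j _ => mul_comm _ _
  obtain ⟨c, hc⟩ := (Submodule.mem_span_range_iff_exists_fun ℝ).1 (mem_span_of_iInf_ker_le_ker hker)
  refine ⟨fun j => F (Pi.single j 1), fun i => - c i, hnonneg, hne, ?_⟩
  ext d
  have := congrArg (fun T : E →ₗ[ℝ] ℝ => T d) hc
  simp at this
  simp [this]

lemma surj_of_indep {E κ : Type*} [NormedAddCommGroup E] [NormedSpace ℝ E] [Fintype κ]
    (b : κ → E →L[ℝ] ℝ) (hb : ∀ c : κ → ℝ, ∑ i, c i • b i = 0 → c = 0) :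
    (ContinuousLinearMap.pi b).range = ⊤ := by
  classical
  by_contra hne
  obtain ⟨F, hF, hle⟩ := Submodule.exists_le_ker_of_lt_top _ (lt_top_iff_ne_top.2 hne)
  have hFsum : ∀ v, F v = ∑ j, v j * F (Pi.single j 1) := by
    intro v
    conv_lhs => rw [pi_eq_sum_univ' v]
    simp [map_sum]
  have h0 := hb (fun i => F (Pi.single i 1)) (by
    ext d
    have := hle (LinearMap.mem_range_self _ d)
    rw [LinearMap.mem_ker, hFsum] at this
    simp only [ContinuousLinearMap.coe_coe, ContinuousLinearMap.coe_pi'] at this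
    simp only [_root_.sum_apply, _root_.smul_apply, smul_eq_mul]
    rw [_root_.zero_apply, ← this]
    exact Finset.sum_congr rfl fun j _ => mul_comm _ _)
  apply hF
  ext v
  simp [fun j => congrFun h0 j]

/-- Lyusternik: a kernel direction of a surjective derivative is tangent to a curve in the level
set. -/
lemma exists_curve {E F : Type*} [NormedAddCommGroup E] [NormedSpace ℝ E] [CompleteSpace E]
    [NormedAddCommGroup F] [NormedSpace ℝ F] [FiniteDimensional ℝ F] {G : E → F} {G' : E →L[ℝ] F}
    {a : E} (hG : HasStrictFDerivAt G G' a) (hsurj : G'.range = ⊤) {d : E} (hd : G' d = 0) :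
    ∃ γ : ℝ → E, γ 0 = a ∧ HasDerivAt γ d 0 ∧ ∀ᶠ t in 𝓝 0, G (γ t) = G a := by
  let w : G'.ker := ⟨d, hd⟩
  refine ⟨fun t => hG.implicitFunction G G' hsurj (G a) (t • w), ?_, ?_, ?_⟩
  · simp
  · have h1 := (hG.to_implicitFunction hsurj).hasFDerivAt
    have h2 : HasDerivAt (fun t : ℝ => t • w) w 0 := by
      simpa using (hasDerivAt_id (0 : ℝ)).smul_const w
    have h3 : HasFDerivAt (hG.implicitFunction G G' hsurj (G a)) G'.ker.subtypeL
        ((fun t : ℝ => t • w) 0) := by simpa using h1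
    exact h3.comp_hasDerivAt (0 : ℝ) h2
  · have h1 := hG.map_implicitFunction_eq hsurj
    have h2 : Tendsto (fun t : ℝ => (G a, t • w)) (𝓝 0) (𝓝 (G a, 0)) := by
      have : Continuous fun t : ℝ => (G a, t • w) := by fun_prop
      simpa using this.tendsto 0
    exact h2.eventually h1

/-! ### First- and second-order expansions of parametric functions -/

/-- The partial derivative of `φ` in its first variable, as a function of both variables. -/
noncomputable def Dx {E P : Type*} [NormedAddCommGroup E] [NormedSpace ℝ E]
    (φ : E → P → ℝ) (q : E × P) : E →L[ℝ] ℝ :=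
  fderiv ℝ (fun x' => φ x' q.2) q.1

section Calculus

variable {E P : Type*} [NormedAddCommGroup E] [NormedSpace ℝ E] [NormedAddCommGroup P]
  [NormedSpace ℝ P] {φ : E → P → ℝ}

lemma contDiff_Dx (hφ : ContDiff ℝ 2 fun q : E × P => φ q.1 q.2) : ContDiff ℝ 1 (Dx φ) := by
  unfold Dx
  refine ContDiff.fderiv (m := 2) (f := fun (q : E × P) x' => φ x' q.2) (g := fun q => q.1)
    ?_ contDiff_fst (by norm_num [one_add_one_eq_two])
  exact hφ.comp (contDiff_snd.prodMk (contDiff_snd.comp contDiff_fst))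

lemma hasStrictFDerivAt_Dx (hφ : ContDiff ℝ 2 fun q : E × P => φ q.1 q.2) (x : E) (p : P) :
    HasStrictFDerivAt (fun x' => φ x' p) (Dx φ (x, p)) x := by
  have h1 : ContDiff ℝ 2 fun x' => φ x' p := hφ.comp (contDiff_id.prodMk contDiff_const)
  exact h1.hasStrictFDerivAt (by norm_num)

lemma fderiv_apply_inl (hφ : ContDiff ℝ 2 fun q : E × P => φ q.1 q.2) (x : E) (p : P) (v : E) :
    fderiv ℝ (fun q : E × P => φ q.1 q.2) (x, p) (v, 0) = Dx φ (x, p) v := by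
  have h1 : HasFDerivAt (fun q : E × P => φ q.1 q.2) _ (x, p) :=
    (hφ.differentiable (by norm_num) (x, p)).hasFDerivAt
  have h2 : HasFDerivAt (fun x' : E => (x', p)) (ContinuousLinearMap.inl ℝ E P) x :=
    hasFDerivAt_prodMk_left x p
  have hc := HasFDerivAt.comp (g := fun q : E × P => φ q.1 q.2) x h1 h2
  have h3 := HasFDerivAt.unique (f := fun x' => φ x' p) hc
    (hasStrictFDerivAt_Dx hφ x p).hasFDerivAt
  rw [← h3]
  simp

/-- Difference quotients of a strictly differentiable map, with moving endpoints `A`, `B`. -/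
lemma tendsto_slope {α V F : Type*} [NormedAddCommGroup V] [NormedSpace ℝ V]
    [NormedAddCommGroup F] [NormedSpace ℝ F] {G : V → F} {G' : V →L[ℝ] F} {a w : V}
    (hG : HasStrictFDerivAt G G' a) {𝓕 : Filter α} {A B : α → V} {t : α → ℝ}
    (hA : Tendsto A 𝓕 (𝓝 a)) (hB : Tendsto B 𝓕 (𝓝 a))
    (hw : Tendsto (fun k => (t k)⁻¹ • (A k - B k)) 𝓕 (𝓝 w)) :
    Tendsto (fun k => (t k)⁻¹ • (G (A k) - G (B k))) 𝓕 (𝓝 (G' w)) := by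
  have h1 := hG.isLittleO.comp_tendsto (hA.prodMk_nhds hB)
  have h2 := (Asymptotics.isBigO_refl (fun k => (t k)⁻¹) 𝓕).smul_isLittleO h1
  have h3 := h2.trans_isBigO (hw.isBigO_one ℝ)
  have h4 := (Asymptotics.isLittleO_one_iff ℝ).1 h3
  have h5 := h4.add ((G'.continuous.tendsto w).comp hw)
  rw [zero_add] at h5
  refine h5.congr fun k => ?_
  simp [smul_sub]

lemma tendsto_slope_Dx (hφ : ContDiff ℝ 2 fun q : E × P => φ q.1 q.2)
    {α : Type*} {𝓕 : Filter α} {X X' : α → E} {Q : α → P} {t : α → ℝ} {x d : E} {p : P}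
    (hX : Tendsto X 𝓕 (𝓝 x)) (hX' : Tendsto X' 𝓕 (𝓝 x)) (hQ : Tendsto Q 𝓕 (𝓝 p))
    (hd : Tendsto (fun k => (t k)⁻¹ • (X' k - X k)) 𝓕 (𝓝 d)) :
    Tendsto (fun k => (t k)⁻¹ * (φ (X' k) (Q k) - φ (X k) (Q k))) 𝓕 (𝓝 (Dx φ (x, p) d)) := by
  rw [← fderiv_apply_inl hφ]
  refine tendsto_slope (hφ.hasStrictFDerivAt (by norm_num)) (hX'.prodMk_nhds hQ)
    (hX.prodMk_nhds hQ) (t := t) ?_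
  simpa using hd.prodMk_nhds (tendsto_const_nhds (x := (0 : P)))

/-- Second-order Taylor expansion with moving base point, direction and parameter. Cauchy's mean
value theorem turns the remainder into a first-order difference quotient of `Dx φ`. -/
lemma tendsto_taylor (hφ : ContDiff ℝ 2 fun q : E × P => φ q.1 q.2)
    {α : Type*} {𝓕 : Filter α} {X X' : α → E} {Q : α → P} {t : α → ℝ} {x d : E} {p : P}
    (hX : Tendsto X 𝓕 (𝓝 x)) (hX' : Tendsto X' 𝓕 (𝓝 x)) (hQ : Tendsto Q 𝓕 (𝓝 p))
    (hd : Tendsto (fun k => (t k)⁻¹ • (X' k - X k)) 𝓕 (𝓝 d)) :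
    Tendsto (fun k => (t k)⁻¹ ^ 2 *
      (φ (X' k) (Q k) - φ (X k) (Q k) - Dx φ (X k, Q k) (X' k - X k))) 𝓕
      (𝓝 (1 / 2 * fderiv ℝ (fun x' => fderiv ℝ (fun x'' => φ x'' p) x' d) x d)) := by
  have hθ : ∀ k, ∃ θ : ℝ, θ ∈ Ioo (0 : ℝ) 1 ∧
      φ (X' k) (Q k) - φ (X k) (Q k) - Dx φ (X k, Q k) (X' k - X k) =
        1 / 2 * (θ⁻¹ * (Dx φ (X k + θ • (X' k - X k), Q k) - Dx φ (X k, Q k)) (X' k - X k)) := by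
    intro k
    set v := X' k - X k with hv
    have hder : ∀ s : ℝ, HasDerivAt (fun s : ℝ => φ (X k + s • v) (Q k) - s * Dx φ (X k, Q k) v)
        (Dx φ (X k + s • v, Q k) v - Dx φ (X k, Q k) v) s := by
      intro s
      have h1 : HasDerivAt (fun s : ℝ => X k + s • v) v s := by
        simpa using ((hasDerivAt_id s).smul_const v).const_add (X k)
      have h2 := (hasStrictFDerivAt_Dx hφ (X k + s • v) (Q k)).hasFDerivAt.comp_hasDerivAt s h1
      exact h2.sub (by simpa using (hasDerivAt_id s).mul_const (Dx φ (X k, Q k) v))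
    have hsq : ∀ s : ℝ, HasDerivAt (fun s : ℝ => s ^ 2) (2 * s) s := fun s => by
      simpa using hasDerivAt_pow 2 s
    obtain ⟨θ, hθ, he⟩ := exists_ratio_hasDerivAt_eq_ratio_slope _ _ (zero_lt_one' ℝ)
      (fun s _ => (hder s).continuousAt.continuousWithinAt) (fun s _ => hder s) _ _
      (fun s _ => (hsq s).continuousAt.continuousWithinAt) (fun s _ => hsq s)
    refine ⟨θ, hθ, ?_⟩
    have h0 : θ ≠ 0 := hθ.1.ne'
    have hX : X k + v = X' k := by simp [hv]
    simp only [one_smul, zero_smul, add_zero, hX] at he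
    rw [_root_.sub_apply]
    field_simp
    linarith
  choose θ hθ hrem using hθ
  have hT := (contDiff_Dx hφ).hasStrictFDerivAt (x := (x, p)) (by norm_num)
  have hXθ : Tendsto (fun k => X k + θ k • (X' k - X k)) 𝓕 (𝓝 x) := by
    have h1 : Tendsto (fun k => θ k • (X' k - X k)) 𝓕 (𝓝 0) := by
      rw [tendsto_zero_iff_norm_tendsto_zero]
      have h2 : Tendsto (fun k => ‖X' k - X k‖) 𝓕 (𝓝 0) := by
        simpa using (hX'.sub hX).norm
      refine squeeze_zero (fun _ => norm_nonneg _) (fun k => ?_) h2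
      rw [norm_smul, Real.norm_of_nonneg (hθ k).1.le]
      exact mul_le_of_le_one_left (norm_nonneg _) (hθ k).2.le
    simpa using hX.add h1
  have hsl := tendsto_slope hT (hXθ.prodMk_nhds hQ) (hX.prodMk_nhds hQ)
    (t := fun k => θ k * t k) (w := (d, 0)) (by
      have := hd.prodMk_nhds (tendsto_const_nhds (x := (0 : P)))
      refine this.congr fun k => ?_
      have h0 : θ k ≠ 0 := (hθ k).1.ne'
      simp [smul_smul, mul_comm, h0])
  have hbil : Continuous fun w : (E →L[ℝ] ℝ) × E => w.1 w.2 := isBoundedBilinearMap_apply.continuous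
  have hfin := ((hbil.tendsto _).comp (hsl.prodMk_nhds hd)).const_mul (1 / 2)
  have hval : fderiv ℝ (fun x' => fderiv ℝ (fun x'' => φ x'' p) x' d) x d =
      fderiv ℝ (Dx φ) (x, p) (d, 0) d := by
    have h2 : HasFDerivAt (fun x' : E => (x', p)) (ContinuousLinearMap.inl ℝ E P) x :=
      hasFDerivAt_prodMk_left x p
    have h3 := (hT.hasFDerivAt.comp x h2).clm_apply (hasFDerivAt_const d x)
    have h4 : fderiv ℝ (fun x' => fderiv ℝ (fun x'' => φ x'' p) x' d) x = _ := h3.fderiv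
    rw [h4]
    simp
  rw [hval]
  refine hfin.congr fun k => ?_
  rw [hrem]
  simp
  ring

lemma eventually_lt_of_deriv_neg {u : ℝ → ℝ} {c : ℝ} (hu : HasDerivAt u c 0) (hc : c < 0) :
    ∀ᶠ t in 𝓝[>] 0, u t < u 0 := by
  have h1 := (hasDerivAt_iff_tendsto_slope.1 hu).eventually (gt_mem_nhds hc)
  have h2 : 𝓝[>] (0 : ℝ) ≤ 𝓝[≠] 0 := nhdsWithin_mono _ fun t ht => ne_of_gt ht
  filter_upwards [h2 h1, self_mem_nhdsWithin] with t ht ht0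
  have ht0' : (0 : ℝ) < t := ht0
  rw [slope_def_field, sub_zero, div_lt_iff₀ ht0', zero_mul] at ht
  linarith

end Calculus

/-! ### The Lagrangian and the KKT conditions -/

section NLP

variable {f : (Fin n → ℝ) → (Fin l → ℝ) → ℝ}
  {g : (Fin n → ℝ) → (Fin l → ℝ) → Fin me → ℝ}
  {h : (Fin n → ℝ) → (Fin l → ℝ) → Fin mi → ℝ}

/-- The gradient in `x` of `yᵀ g + zᵀ h`, as a functional. -/
noncomputable def conGrad (g : (Fin n → ℝ) → (Fin l → ℝ) → Fin me → ℝ)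
    (h : (Fin n → ℝ) → (Fin l → ℝ) → Fin mi → ℝ)
    (q : (Fin n → ℝ) × (Fin l → ℝ)) (w : (Fin me → ℝ) × (Fin mi → ℝ)) : (Fin n → ℝ) →L[ℝ] ℝ :=
  ∑ i, w.1 i • Dx (fun x p => g x p i) q + ∑ j, w.2 j • Dx (fun x p => h x p j) q

/-- The Lagrangian with the multipliers counted among the parameters, so that the lemmas on
parametric functions apply to it. -/
noncomputable def LagP (f : (Fin n → ℝ) → (Fin l → ℝ) → ℝ)
    (g : (Fin n → ℝ) → (Fin l → ℝ) → Fin me → ℝ)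
    (h : (Fin n → ℝ) → (Fin l → ℝ) → Fin mi → ℝ) (x : Fin n → ℝ)
    (w : (Fin l → ℝ) × ((Fin me → ℝ) × (Fin mi → ℝ))) : ℝ :=
  Lag f g h w.1 x w.2.1 w.2.2

lemma contDiff_LagP
    (hf : ContDiff ℝ 2 fun q : (Fin n → ℝ) × (Fin l → ℝ) => f q.1 q.2)
    (hg : ∀ i : Fin me, ContDiff ℝ 2 fun q : (Fin n → ℝ) × (Fin l → ℝ) => g q.1 q.2 i)
    (hh : ∀ j : Fin mi, ContDiff ℝ 2 fun q : (Fin n → ℝ) × (Fin l → ℝ) => h q.1 q.2 j) :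
    ContDiff ℝ 2 fun q : (Fin n → ℝ) × ((Fin l → ℝ) × ((Fin me → ℝ) × (Fin mi → ℝ))) =>
      LagP f g h q.1 q.2 := by
  have hpr : ContDiff ℝ 2 fun q : (Fin n → ℝ) × ((Fin l → ℝ) × ((Fin me → ℝ) × (Fin mi → ℝ))) =>
      (q.1, q.2.1) := by fun_prop
  unfold LagP Lag
  refine ((hf.comp hpr).add (ContDiff.sum fun i _ => ?_)).add (ContDiff.sum fun j _ => ?_)
  · exact ContDiff.mul (by fun_prop) ((hg i).comp hpr)
  · exact ContDiff.mul (by fun_prop) ((hh j).comp hpr)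

lemma Dx_LagP
    (hf : ContDiff ℝ 2 fun q : (Fin n → ℝ) × (Fin l → ℝ) => f q.1 q.2)
    (hg : ∀ i : Fin me, ContDiff ℝ 2 fun q : (Fin n → ℝ) × (Fin l → ℝ) => g q.1 q.2 i)
    (hh : ∀ j : Fin mi, ContDiff ℝ 2 fun q : (Fin n → ℝ) × (Fin l → ℝ) => h q.1 q.2 j)
    (x : Fin n → ℝ) (p : Fin l → ℝ) (w : (Fin me → ℝ) × (Fin mi → ℝ)) :
    Dx (LagP f g h) (x, (p, w)) = Dx f (x, p) + conGrad g h (x, p) w := by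
  have h1 := (hasStrictFDerivAt_Dx hf x p).hasFDerivAt
  have h2 := HasFDerivAt.fun_sum (u := Finset.univ) fun (i : Fin me) _ =>
    (hasStrictFDerivAt_Dx (φ := fun x p => g x p i) (hg i) x p).hasFDerivAt.const_mul (w.1 i)
  have h3 := HasFDerivAt.fun_sum (u := Finset.univ) fun (j : Fin mi) _ =>
    (hasStrictFDerivAt_Dx (φ := fun x p => h x p j) (hh j) x p).hasFDerivAt.const_mul (w.2 j)
  have h4 := ((h1.add h2).add h3).fderiv
  rw [conGrad, ← add_assoc]
  exact h4

lemma IsKKT.stationary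
    (hf : ContDiff ℝ 2 fun q : (Fin n → ℝ) × (Fin l → ℝ) => f q.1 q.2)
    (hg : ∀ i : Fin me, ContDiff ℝ 2 fun q : (Fin n → ℝ) × (Fin l → ℝ) => g q.1 q.2 i)
    (hh : ∀ j : Fin mi, ContDiff ℝ 2 fun q : (Fin n → ℝ) × (Fin l → ℝ) => h q.1 q.2 j)
    {x : Fin n → ℝ} {p : Fin l → ℝ} {y : Fin me → ℝ} {z : Fin mi → ℝ}
    (hk : IsKKT f g h p x y z) : Dx f (x, p) + conGrad g h (x, p) (y, z) = 0 := by
  rw [← Dx_LagP hf hg hh]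
  exact hk.1

lemma IsKKT.compl {x : Fin n → ℝ} {p : Fin l → ℝ} {y : Fin me → ℝ} {z : Fin mi → ℝ}
    (hk : IsKKT f g h p x y z) (j : Fin mi) : z j * h x p j = 0 := by
  obtain ⟨-, -, hh, hz, hs⟩ := hk
  refine (Finset.sum_eq_zero_iff_of_nonpos fun i _ => ?_).1 hs j (Finset.mem_univ j)
  exact mul_nonpos_of_nonneg_of_nonpos (hz i) (hh i)

lemma IsKKT.eq_zero {x : Fin n → ℝ} {p : Fin l → ℝ} {y : Fin me → ℝ} {z : Fin mi → ℝ}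
    (hk : IsKKT f g h p x y z) (j : Fin mi) (hj : h x p j ≠ 0) : z j = 0 :=
  (mul_eq_zero.1 (hk.compl j)).resolve_right hj

/-- The graph of the KKT conditions, in point, parameter and multipliers jointly, is closed. -/
lemma isClosed_kkt
    (hf : ContDiff ℝ 2 fun q : (Fin n → ℝ) × (Fin l → ℝ) => f q.1 q.2)
    (hg : ∀ i : Fin me, ContDiff ℝ 2 fun q : (Fin n → ℝ) × (Fin l → ℝ) => g q.1 q.2 i)
    (hh : ∀ j : Fin mi, ContDiff ℝ 2 fun q : (Fin n → ℝ) × (Fin l → ℝ) => h q.1 q.2 j) :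
    IsClosed {w : (Fin n → ℝ) × ((Fin l → ℝ) × ((Fin me → ℝ) × (Fin mi → ℝ))) |
      IsKKT f g h w.2.1 w.1 w.2.2.1 w.2.2.2} := by
  have hpr : Continuous fun q : (Fin n → ℝ) × ((Fin l → ℝ) × ((Fin me → ℝ) × (Fin mi → ℝ))) =>
      (q.1, q.2.1) := by fun_prop
  have hg' : ∀ i, Continuous fun w : (Fin n → ℝ) × ((Fin l → ℝ) × ((Fin me → ℝ) × (Fin mi → ℝ))) =>
      g w.1 w.2.1 i := fun i => (hg i).continuous.comp hpr
  have hh' : ∀ j, Continuous fun w : (Fin n → ℝ) × ((Fin l → ℝ) × ((Fin me → ℝ) × (Fin mi → ℝ))) =>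
      h w.1 w.2.1 j := fun j => (hh j).continuous.comp hpr
  refine IsClosed.and ?_ (IsClosed.and ?_ (IsClosed.and ?_ (IsClosed.and ?_ ?_)))
  · exact isClosed_eq (contDiff_Dx (contDiff_LagP hf hg hh)).continuous continuous_const
  · exact isClosed_eq (continuous_pi hg') continuous_const
  · exact isClosed_le (continuous_pi hh') continuous_const
  · exact isClosed_le continuous_const (by fun_prop)
  · exact isClosed_eq (by fun_prop) continuous_const

/-! ### MFCQ and multipliers -/

/-- Linear independence of gradient vectors, restated for the derivatives as functionals. -/
lemma gradx_indep_iff {κ : Type*} [Fintype κ] (b : κ → (Fin n → ℝ) →L[ℝ] ℝ) :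
    LinearIndependent ℝ (fun i => (fun k => b i (Pi.single k 1) : Fin n → ℝ)) ↔
      ∀ c : κ → ℝ, ∑ i, c i • b i = 0 → c = 0 := by
  have key : ∀ c : κ → ℝ, (∑ i, c i • (fun k => b i (Pi.single k 1) : Fin n → ℝ) = 0) ↔
      ∑ i, c i • b i = 0 := by
    intro c
    constructor
    · intro hc
      refine ContinuousLinearMap.coe_injective (LinearMap.pi_ext' fun k => ?_)
      ext
      have := congrFun hc k
      simpa using this
    · intro hc
      ext k
      have := congrArg (fun T : (Fin n → ℝ) →L[ℝ] ℝ => T (Pi.single k 1)) hc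
      simpa using this
  rw [Fintype.linearIndependent_iff]
  refine forall_congr' fun c => ?_
  rw [key, funext_iff]
  rfl

lemma MFCQ.indep {x : Fin n → ℝ} {p : Fin l → ℝ} (hm : MFCQ g h p x) :
    ∀ c : Fin me → ℝ, ∑ i, c i • Dx (fun x p => g x p i) (x, p) = 0 → c = 0 :=
  (gradx_indep_iff _).1 hm.1

lemma sum_extend {V : Type*} [AddCommGroup V] [Module ℝ V] (S : Fin mi → Prop)
    (μ : {j // S j} → ℝ) (v : Fin mi → V) :
    ∑ j, (if hj : S j then μ ⟨j, hj⟩ else 0) • v j = ∑ j : {j // S j}, μ j • v j := by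
  rw [← Fintype.sum_subtype_add_sum_subtype S]
  have h2 : ∀ j : {j // ¬ S j}, (if hj : S j.1 then μ ⟨j.1, hj⟩ else 0) • v j.1 = 0 := fun j => by
    simp [j.2]
  rw [Finset.sum_eq_zero fun j _ => h2 j, add_zero]
  exact Finset.sum_congr rfl fun j _ => by simp [j.2]

/-- The dual (positive linear independence) form of MFCQ: `0` is the only multiplier supported on the
active set, with nonnegative inequality part, whose gradient combination vanishes. -/
lemma mfcq_iff_dual {x : Fin n → ℝ} {p : Fin l → ℝ} : MFCQ g h p x ↔
    ∀ w : (Fin me → ℝ) × (Fin mi → ℝ), 0 ≤ w.2 → (∀ j, h x p j ≠ 0 → w.2 j = 0) →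
      conGrad g h (x, p) w = 0 → w = 0 := by
  constructor
  · rintro hm ⟨y, z⟩ hz hsupp hw
    obtain ⟨d, hd1, hd2⟩ := hm.2
    have hd1' : ∀ i, Dx (fun x p => g x p i) (x, p) d = 0 := hd1
    have hd2' : ∀ j, h x p j = 0 → Dx (fun x p => h x p j) (x, p) d < 0 := hd2
    have hw1 := congrArg (fun T : (Fin n → ℝ) →L[ℝ] ℝ => T d) hw
    simp only [conGrad, _root_.add_apply, _root_.sum_apply, _root_.smul_apply, hd1',
      smul_eq_mul, mul_zero, Finset.sum_const_zero, zero_add, _root_.zero_apply] at hw1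
    have hle : ∀ j, z j * Dx (fun x p => h x p j) (x, p) d ≤ 0 := fun j => by
      by_cases hj : h x p j = 0
      · exact mul_nonpos_of_nonneg_of_nonpos (hz j) (hd2' j hj).le
      · have : z j = 0 := hsupp j hj
        simp [this]
    have hz0 : z = 0 := by
      ext j
      by_cases hj : h x p j = 0
      · have := (Finset.sum_eq_zero_iff_of_nonpos fun i _ => hle i).1 hw1 j (Finset.mem_univ j)
        exact (mul_eq_zero.1 this).resolve_right (hd2' j hj).ne
      · exact hsupp j hj
    subst hz0
    have hy0 : y = 0 := hm.indep y (by simpa [conGrad] using hw)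
    simp [hy0]
  · intro hdual
    refine ⟨(gradx_indep_iff fun i => Dx (fun x p => g x p i) (x, p)).2 fun c hc => ?_, ?_⟩
    · exact congrArg Prod.fst (hdual (c, 0) le_rfl (fun _ _ => rfl) (by simpa [conGrad] using hc))
    · by_contra hno
      obtain ⟨μ, ν, hμ, hμ0, hsum⟩ := motzkin_s8
        (fun j : {j // h x p j = 0} => Dx (fun x p => h x p j.1) (x, p))
        (fun i => Dx (fun x p => g x p i) (x, p))
        (fun ⟨d, hd1, hd2⟩ => hno ⟨d, hd1, fun j hj => hd2 ⟨j, hj⟩⟩)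
      let z : Fin mi → ℝ := fun j => if hj : h x p j = 0 then μ ⟨j, hj⟩ else 0
      have hzs : ∑ j, z j • Dx (fun x p => h x p j) (x, p) =
          ∑ j : {j // h x p j = 0}, μ j • Dx (fun x p => h x p j.1) (x, p) :=
        sum_extend _ _ _
      have := hdual (ν, z) (fun j => by
          by_cases hj : h x p j = 0
          · simpa [z, hj] using hμ ⟨j, hj⟩
          · simp [z, hj]) (fun j hj => by simp [z, hj]) (by
          rw [conGrad, hzs]; exact hsum)
      apply hμ0
      ext ⟨j, hj⟩
      have := congrFun (congrArg Prod.snd this) j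
      simpa [z, hj] using this

lemma continuous_conGrad
    (hg : ∀ i : Fin me, ContDiff ℝ 2 fun q : (Fin n → ℝ) × (Fin l → ℝ) => g q.1 q.2 i)
    (hh : ∀ j : Fin mi, ContDiff ℝ 2 fun q : (Fin n → ℝ) × (Fin l → ℝ) => h q.1 q.2 j) :
    Continuous fun w : ((Fin n → ℝ) × (Fin l → ℝ)) × ((Fin me → ℝ) × (Fin mi → ℝ)) =>
      conGrad g h w.1 w.2 := by
  unfold conGrad
  refine (continuous_finsetSum _ fun i _ => ?_).add (continuous_finsetSum _ fun j _ => ?_)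
  · have h1 : Continuous fun w : ((Fin n → ℝ) × (Fin l → ℝ)) × ((Fin me → ℝ) × (Fin mi → ℝ)) =>
      w.2.1 i := by fun_prop
    exact h1.smul ((contDiff_Dx (φ := fun x p => g x p i) (hg i)).continuous.comp continuous_fst)
  · have h1 : Continuous fun w : ((Fin n → ℝ) × (Fin l → ℝ)) × ((Fin me → ℝ) × (Fin mi → ℝ)) =>
      w.2.2 j := by fun_prop
    exact h1.smul ((contDiff_Dx (φ := fun x p => h x p j) (hh j)).continuous.comp continuous_fst)

lemma conGrad_smul (q : (Fin n → ℝ) × (Fin l → ℝ)) (c : ℝ) (w : (Fin me → ℝ) × (Fin mi → ℝ)) :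
    conGrad g h q (c • w) = c • conGrad g h q w := by
  simp [conGrad, Finset.smul_sum, smul_smul]

/-- Near a point where MFCQ holds, positive linear independence holds with a uniform constant: the
norm of `conGrad` is bounded below on the compact set of unit multipliers supported on the active
set at `(x, p)`, and the active set can only shrink nearby. -/
lemma uniform_dual
    (hg : ∀ i : Fin me, ContDiff ℝ 2 fun q : (Fin n → ℝ) × (Fin l → ℝ) => g q.1 q.2 i)
    (hh : ∀ j : Fin mi, ContDiff ℝ 2 fun q : (Fin n → ℝ) × (Fin l → ℝ) => h q.1 q.2 j)
    {x : Fin n → ℝ} {p : Fin l → ℝ} (hm : MFCQ g h p x) :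
    ∃ c : ℝ, 0 < c ∧ ∀ᶠ q in 𝓝 (x, p), ∀ w : (Fin me → ℝ) × (Fin mi → ℝ), 0 ≤ w.2 →
      (∀ j, h q.1 q.2 j ≠ 0 → w.2 j = 0) → c * ‖w‖ ≤ ‖conGrad g h q w‖ := by
  let K : Set ((Fin me → ℝ) × (Fin mi → ℝ)) :=
    Metric.sphere 0 1 ∩ {w | 0 ≤ w.2 ∧ ∀ j, h x p j ≠ 0 → w.2 j = 0}
  have hK : IsCompact K := by
    refine (isCompact_sphere _ _).inter_right (IsClosed.and ?_ ?_)
    · exact isClosed_le continuous_const continuous_snd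
    · have : {w : (Fin me → ℝ) × (Fin mi → ℝ) | ∀ j, h x p j ≠ 0 → w.2 j = 0} =
          ⋂ j, ⋂ _ : h x p j ≠ 0, {w | w.2 j = 0} := by ext; simp
      exact this ▸ isClosed_iInter fun j => isClosed_iInter fun _ =>
        isClosed_eq (by fun_prop) continuous_const
  have hcont := (continuous_conGrad hg hh).norm
  have hpos : ∀ w ∈ K, 0 < ‖conGrad g h (x, p) w‖ := by
    rintro w ⟨hw1, hw2, hw3⟩
    refine norm_pos_iff.2 fun h0 => ?_
    have := mfcq_iff_dual.1 hm w hw2 hw3 h0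
    simp [this] at hw1
  obtain ⟨c, hc, hcK⟩ := hK.exists_forall_le' (a := 0)
    (f := fun w => ‖conGrad g h (x, p) w‖)
    (hcont.comp (continuous_const.prodMk continuous_id)).continuousOn hpos
  have htube : ∀ᶠ q in 𝓝 (x, p), ∀ w ∈ K, c / 2 < ‖conGrad g h q w‖ := by
    refine hK.eventually_forall_of_forall_eventually fun w hw => ?_
    exact hcont.continuousAt.eventually (lt_mem_nhds (by
      have := hcK w hw
      simp only
      linarith))
  have hact : ∀ᶠ q in 𝓝 (x, p), ∀ j, h x p j ≠ 0 → h q.1 q.2 j ≠ 0 := by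
    refine eventually_all.2 fun j => ?_
    by_cases hj : h x p j = 0
    · simp [hj]
    · filter_upwards [(hh j).continuous.continuousAt.eventually_ne hj] with q hq _ using hq
  refine ⟨c / 2, by linarith, ?_⟩
  filter_upwards [htube, hact] with q hq1 hq2 w hw1 hw2
  by_cases hw0 : w = 0
  · simp [hw0]
  have hwn : 0 < ‖w‖ := norm_pos_iff.2 hw0
  have := hq1 (‖w‖⁻¹ • w) ⟨by simp [norm_smul, hwn.ne'],
    fun j => mul_nonneg (inv_nonneg.2 hwn.le) (hw1 j),
    fun j hj => by simp [hw2 j (hq2 j hj)]⟩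
  rw [conGrad_smul, norm_smul, norm_inv, norm_norm, lt_inv_mul_iff₀ hwn] at this
  linarith

lemma eventually_mfcq
    (hg : ∀ i : Fin me, ContDiff ℝ 2 fun q : (Fin n → ℝ) × (Fin l → ℝ) => g q.1 q.2 i)
    (hh : ∀ j : Fin mi, ContDiff ℝ 2 fun q : (Fin n → ℝ) × (Fin l → ℝ) => h q.1 q.2 j)
    {x : Fin n → ℝ} {p : Fin l → ℝ} (hm : MFCQ g h p x) :
    ∀ᶠ q in 𝓝 (x, p), MFCQ g h q.2 q.1 := by
  obtain ⟨c, hc, hev⟩ := uniform_dual hg hh hm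
  filter_upwards [hev] with q hq
  refine mfcq_iff_dual.2 fun w hw1 hw2 hw3 => ?_
  have := hq w hw1 hw2
  rw [show conGrad g h q w = 0 from hw3, norm_zero] at this
  have h0 : ‖w‖ ≤ 0 := by
    by_contra hlt
    have := mul_pos hc (not_le.1 hlt)
    linarith
  exact norm_le_zero_iff.1 h0

lemma eventually_multiplier_bound
    (hf : ContDiff ℝ 2 fun q : (Fin n → ℝ) × (Fin l → ℝ) => f q.1 q.2)
    (hg : ∀ i : Fin me, ContDiff ℝ 2 fun q : (Fin n → ℝ) × (Fin l → ℝ) => g q.1 q.2 i)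
    (hh : ∀ j : Fin mi, ContDiff ℝ 2 fun q : (Fin n → ℝ) × (Fin l → ℝ) => h q.1 q.2 j)
    {x : Fin n → ℝ} {p : Fin l → ℝ} (hm : MFCQ g h p x) :
    ∃ C : ℝ, ∀ᶠ q in 𝓝 (x, p), ∀ y z, IsKKT f g h q.2 q.1 y z → ‖(y, z)‖ ≤ C := by
  obtain ⟨c, hc, hev⟩ := uniform_dual hg hh hm
  have hb : ∀ᶠ q in 𝓝 (x, p), ‖Dx f q‖ < ‖Dx f (x, p)‖ + 1 :=
    (contDiff_Dx hf).continuous.norm.continuousAt.eventually (gt_mem_nhds (by simp))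
  refine ⟨(‖Dx f (x, p)‖ + 1) / c, ?_⟩
  filter_upwards [hev, hb] with q hq hbq y z hk
  have h1 := hq (y, z) hk.2.2.2.1 fun j hj => hk.eq_zero j hj
  have h2 : conGrad g h q (y, z) = - Dx f q :=
    (neg_eq_of_add_eq_zero_right (hk.stationary hf hg hh)).symm
  rw [h2, norm_neg] at h1
  rw [le_div_iff₀ hc]
  linarith

/-! ### Feasible curves, necessity of the KKT conditions, stability of feasibility -/

lemma hasStrictFDerivAt_g
    (hg : ∀ i : Fin me, ContDiff ℝ 2 fun q : (Fin n → ℝ) × (Fin l → ℝ) => g q.1 q.2 i)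
    (x : Fin n → ℝ) (p : Fin l → ℝ) :
    HasStrictFDerivAt (fun x' => g x' p)
      (ContinuousLinearMap.pi fun i => Dx (fun x p => g x p i) (x, p)) x :=
  hasStrictFDerivAt_pi.2 fun i => hasStrictFDerivAt_Dx (φ := fun x p => g x p i) (hg i) x p

/-- A direction tangent to the equality constraints and strictly decreasing the active inequality
constraints is the velocity of a curve that enters the strictly feasible set. -/
lemma exists_feasible_curve
    (hg : ∀ i : Fin me, ContDiff ℝ 2 fun q : (Fin n → ℝ) × (Fin l → ℝ) => g q.1 q.2 i)
    (hh : ∀ j : Fin mi, ContDiff ℝ 2 fun q : (Fin n → ℝ) × (Fin l → ℝ) => h q.1 q.2 j)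
    {x : Fin n → ℝ} {p : Fin l → ℝ} (hm : MFCQ g h p x) (hgx : g x p = 0) (hhx : h x p ≤ 0)
    {d : Fin n → ℝ} (hd1 : ∀ i, Dx (fun x p => g x p i) (x, p) d = 0)
    (hd2 : ∀ j, h x p j = 0 → Dx (fun x p => h x p j) (x, p) d < 0) :
    ∃ γ : ℝ → Fin n → ℝ, γ 0 = x ∧ HasDerivAt γ d 0 ∧
      ∀ᶠ t in 𝓝[>] 0, g (γ t) p = 0 ∧ ∀ j, h (γ t) p j < 0 := by
  obtain ⟨γ, h0, hd, hG⟩ := exists_curve (hasStrictFDerivAt_g hg x p)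
    (surj_of_indep _ hm.indep) (d := d) (by ext i; exact hd1 i)
  refine ⟨γ, h0, hd, (hG.filter_mono nhdsWithin_le_nhds |>.mono fun t ht => ht.trans hgx).and ?_⟩
  refine eventually_all.2 fun j => ?_
  have hj : HasDerivAt (fun t => h (γ t) p j) (Dx (fun x p => h x p j) (x, p) d) 0 := by
    have h1 := (hasStrictFDerivAt_Dx (φ := fun x p => h x p j) (hh j) x p).hasFDerivAt
    rw [← h0] at h1
    rw [← h0]
    exact HasFDerivAt.comp_hasDerivAt (l := fun x' => h x' p j) (0 : ℝ) h1 hd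
  by_cases hact : h x p j = 0
  · filter_upwards [eventually_lt_of_deriv_neg hj (hd2 j hact)] with t ht
    rwa [h0, hact] at ht
  · have hlt : h (γ 0) p j < 0 := by rw [h0]; exact lt_of_le_of_ne (hhx j) hact
    exact (hj.continuousAt.eventually (gt_mem_nhds hlt)).filter_mono nhdsWithin_le_nhds

/-- First-order necessary conditions under MFCQ. Minimality along feasible curves rules out a common
strict descent direction, so Motzkin's alternative gives Fritz John multipliers; MFCQ makes the
multiplier of `f` nonzero. -/
lemma IsLocalSol.exists_kkt
    (hf : ContDiff ℝ 2 fun q : (Fin n → ℝ) × (Fin l → ℝ) => f q.1 q.2)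
    (hg : ∀ i : Fin me, ContDiff ℝ 2 fun q : (Fin n → ℝ) × (Fin l → ℝ) => g q.1 q.2 i)
    (hh : ∀ j : Fin mi, ContDiff ℝ 2 fun q : (Fin n → ℝ) × (Fin l → ℝ) => h q.1 q.2 j)
    {x : Fin n → ℝ} {p : Fin l → ℝ} (hs : IsLocalSol f g h p x) (hm : MFCQ g h p x) :
    ∃ y z, IsKKT f g h p x y z := by
  obtain ⟨hgx, hhx, W, hW, hmin⟩ := hs
  obtain ⟨μ, ν, hμ, hμ0, hsum⟩ := motzkin_s8
    (fun o : Option {j // h x p j = 0} =>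
      o.elim (Dx f (x, p)) fun j => Dx (fun x p => h x p j.1) (x, p))
    (fun i => Dx (fun x p => g x p i) (x, p)) (by
      rintro ⟨d, hd1, hd2⟩
      obtain ⟨γ, h0, hd, hfeas⟩ := exists_feasible_curve hg hh hm hgx hhx hd1
        fun j hj => hd2 (some ⟨j, hj⟩)
      have hfd : HasDerivAt (fun t => f (γ t) p) (Dx f (x, p) d) 0 := by
        have h1 := (hasStrictFDerivAt_Dx hf x p).hasFDerivAt
        rw [← h0] at h1
        rw [← h0]
        exact HasFDerivAt.comp_hasDerivAt (l := fun x' => f x' p) (0 : ℝ) h1 hd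
      have hγW : ∀ᶠ t in 𝓝[>] (0 : ℝ), γ t ∈ W :=
        (hd.continuousAt.eventually (by rwa [h0])).filter_mono nhdsWithin_le_nhds
      obtain ⟨t, ht1, ht2, ht3⟩ :=
        ((eventually_lt_of_deriv_neg hfd (hd2 none)).and (hfeas.and hγW)).exists
      have := hmin _ ht3 ht2.1 fun j => (ht2.2 j).le
      rw [h0] at ht1
      linarith)
  rw [Fintype.sum_option] at hsum
  simp only [Option.elim] at hsum
  let z : Fin mi → ℝ := fun j => if hj : h x p j = 0 then μ (some ⟨j, hj⟩) else 0
  have hz : 0 ≤ z := fun j => by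
    by_cases hj : h x p j = 0
    · simpa [z, hj] using hμ (some ⟨j, hj⟩)
    · simp [z, hj]
  have hzsupp : ∀ j, h x p j ≠ 0 → z j = 0 := fun j hj => by simp [z, hj]
  have hsum' : μ none • Dx f (x, p) + conGrad g h (x, p) (ν, z) = 0 := by
    have hze : ∑ j, z j • Dx (fun x p => h x p j) (x, p) = _ :=
      sum_extend _ (fun j => μ (some j)) _
    rw [conGrad]
    simp only
    rw [hze, ← hsum]
    abel
  have hμn : μ none ≠ 0 := by
    intro h0
    rw [h0, zero_smul, zero_add] at hsum'
    have h1 := mfcq_iff_dual.1 hm (ν, z) hz hzsupp hsum'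
    apply hμ0
    ext o
    rcases o with _ | ⟨j, hj⟩
    · exact h0
    · have := congrFun (congrArg Prod.snd h1) j
      simpa [z, hj] using this
  have hμp : 0 < μ none := lt_of_le_of_ne (hμ none) (Ne.symm hμn)
  let w : (Fin me → ℝ) × (Fin mi → ℝ) := (μ none)⁻¹ • (ν, z)
  have hzero : Dx f (x, p) + conGrad g h (x, p) w = 0 := by
    have := congrArg (fun T => (μ none)⁻¹ • T) hsum'
    show Dx f (x, p) + conGrad g h (x, p) ((μ none)⁻¹ • (ν, z)) = 0
    rw [conGrad_smul]
    simpa [smul_smul, hμn] using this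
  refine ⟨w.1, w.2, ?_, hgx, hhx, fun j => mul_nonneg (inv_nonneg.2 hμp.le) (hz j), ?_⟩
  · rw [← Dx_LagP hf hg hh] at hzero
    exact hzero
  · refine Finset.sum_eq_zero fun j _ => ?_
    by_cases hj : h x p j = 0
    · simp [hj]
    · simp [w, hzsupp j hj]

/-- Under MFCQ at a feasible point, nearby programs have feasible points nearby. A strictly
feasible point of the unperturbed program comes from a feasible curve; at such a point
`(x, p) ↦ (g x p, p)` is open. -/
lemma eventually_exists_feasible
    (hg : ∀ i : Fin me, ContDiff ℝ 2 fun q : (Fin n → ℝ) × (Fin l → ℝ) => g q.1 q.2 i)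
    (hh : ∀ j : Fin mi, ContDiff ℝ 2 fun q : (Fin n → ℝ) × (Fin l → ℝ) => h q.1 q.2 j)
    {x : Fin n → ℝ} {p : Fin l → ℝ} (hm : MFCQ g h p x) (hgx : g x p = 0) (hhx : h x p ≤ 0)
    {N : Set (Fin n → ℝ)} (hN : N ∈ 𝓝 x) :
    ∀ᶠ p' in 𝓝 p, ∃ x' ∈ N, g x' p' = 0 ∧ h x' p' ≤ 0 := by
  obtain ⟨d, hd1, hd2⟩ := hm.2
  obtain ⟨γ, h0, hd, hfeas⟩ := exists_feasible_curve hg hh hm hgx hhx hd1 hd2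
  have hcl : ∀ᶠ x' in 𝓝 x, MFCQ g h p x' :=
    (Continuous.prodMk_left p).continuousAt.eventually (eventually_mfcq hg hh hm)
  have hγ : Tendsto γ (𝓝[>] 0) (𝓝 x) := by
    have : Tendsto γ (𝓝 0) (𝓝 (γ 0)) := hd.continuousAt
    rw [h0] at this
    exact this.mono_left nhdsWithin_le_nhds
  obtain ⟨t, ⟨htg, hth⟩, htm, htN⟩ := (hfeas.and ((hγ.eventually hcl).and
    (hγ.eventually (eventually_mem_nhds_iff.2 hN)))).exists
  set x₀ := γ t
  let Φ : (Fin n → ℝ) × (Fin l → ℝ) → (Fin me → ℝ) × (Fin l → ℝ) := fun q => (g q.1 q.2, q.2)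
  have hΦ1 : HasStrictFDerivAt (fun q : (Fin n → ℝ) × (Fin l → ℝ) => g q.1 q.2)
      (ContinuousLinearMap.pi fun i =>
        fderiv ℝ (fun q : (Fin n → ℝ) × (Fin l → ℝ) => g q.1 q.2 i) (x₀, p)) (x₀, p) :=
    hasStrictFDerivAt_pi.2 fun i => (hg i).hasStrictFDerivAt (by norm_num)
  have hΦ := hΦ1.prodMk (hasStrictFDerivAt_snd (𝕜 := ℝ) (p := (x₀, p)))
  have hsurj := surj_of_indep _ htm.indep
  have hmap := hΦ.map_nhds_eq_of_surj (by
    rw [LinearMap.range_eq_top] at hsurj ⊢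
    rintro ⟨u, v⟩
    obtain ⟨a, ha⟩ := hsurj (u - fun i =>
      fderiv ℝ (fun q : (Fin n → ℝ) × (Fin l → ℝ) => g q.1 q.2 i) (x₀, p) (0, v))
    refine ⟨(a, v), Prod.ext ?_ rfl⟩
    ext i
    have hi := congrFun ha i
    have hsplit : ((a, v) : (Fin n → ℝ) × (Fin l → ℝ)) = (a, 0) + (0, v) := by simp
    have hinl := fderiv_apply_inl (φ := fun x p => g x p i) (hg i) x₀ p a
    simp only [ContinuousLinearMap.coe_coe, ContinuousLinearMap.coe_pi', Pi.sub_apply] at hi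
    simp only [ContinuousLinearMap.coe_coe, ContinuousLinearMap.prod_apply,
      ContinuousLinearMap.coe_pi']
    rw [hsplit, map_add, hinl, hi]
    ring)
  have hgood : {q : (Fin n → ℝ) × (Fin l → ℝ) | q.1 ∈ N ∧ ∀ j, h q.1 q.2 j < 0} ∈ 𝓝 (x₀, p) := by
    have hN' : ∀ᶠ q : (Fin n → ℝ) × (Fin l → ℝ) in 𝓝 (x₀, p), q.1 ∈ N :=
      continuous_fst.continuousAt.eventually htN
    refine Filter.Eventually.and hN' (eventually_all.2 fun j => ?_)
    exact (hh j).continuous.continuousAt.eventually (gt_mem_nhds (hth j))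
  have himg := image_mem_map (m := fun q : (Fin n → ℝ) × (Fin l → ℝ) => (g q.1 q.2, q.2)) hgood
  rw [hmap] at himg
  have hc : Tendsto (fun p' : Fin l → ℝ => ((0 : Fin me → ℝ), p')) (𝓝 p) (𝓝 (g x₀ p, p)) := by
    rw [htg]
    exact (Continuous.prodMk_right (0 : Fin me → ℝ)).tendsto p
  filter_upwards [hc.eventually himg] with p' hp'
  obtain ⟨⟨x', p''⟩, ⟨hx'1, hx'2⟩, heq⟩ := hp'
  simp only [Prod.mk.injEq] at heq
  obtain ⟨he1, rfl⟩ := heq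
  exact ⟨x', hx'1, he1, fun j => (hx'2 j).le⟩

/-! ### Strict optimality of KKT points -/

/-- Along an ultrafilter converging to `(x, p)`, multipliers of KKT points stay bounded by MFCQ,
hence converge, and the limit is a KKT multiplier for `x`. -/
lemma exists_multiplier_limit
    (hf : ContDiff ℝ 2 fun q : (Fin n → ℝ) × (Fin l → ℝ) => f q.1 q.2)
    (hg : ∀ i : Fin me, ContDiff ℝ 2 fun q : (Fin n → ℝ) × (Fin l → ℝ) => g q.1 q.2 i)
    (hh : ∀ j : Fin mi, ContDiff ℝ 2 fun q : (Fin n → ℝ) × (Fin l → ℝ) => h q.1 q.2 j)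
    {x : Fin n → ℝ} {p : Fin l → ℝ} (hm : MFCQ g h p x)
    {α : Type*} {𝒰 : Ultrafilter α} {X : α → Fin n → ℝ} {Q : α → Fin l → ℝ}
    {Λ : α → (Fin me → ℝ) × (Fin mi → ℝ)}
    (hX : Tendsto X 𝒰 (𝓝 x)) (hQ : Tendsto Q 𝒰 (𝓝 p))
    (hk : ∀ᶠ a in (𝒰 : Filter α), IsKKT f g h (Q a) (X a) (Λ a).1 (Λ a).2) :
    ∃ w, Tendsto Λ 𝒰 (𝓝 w) ∧ IsKKT f g h p x w.1 w.2 := by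
  obtain ⟨C, hC⟩ := eventually_multiplier_bound hf hg hh hm
  have hb : ∀ᶠ a in (𝒰 : Filter α), Λ a ∈ Metric.closedBall 0 C := by
    filter_upwards [(hX.prodMk_nhds hQ).eventually hC, hk] with a h1 h2
    simpa using h1 _ _ h2
  obtain ⟨w, -, hw⟩ := (isCompact_closedBall (0 : (Fin me → ℝ) × (Fin mi → ℝ))
    C).ultrafilter_le_nhds' (𝒰.map Λ) hb
  have hw' : Tendsto Λ 𝒰 (𝓝 w) := hw
  exact ⟨w, hw', (isClosed_kkt hf hg hh).mem_of_tendsto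
    (hX.prodMk_nhds (hQ.prodMk_nhds hw')) hk⟩

/-- Near `x`, and for parameters near `p`, a KKT point has a strictly smaller objective value than
every other feasible point. If not, normalised differences of offending pairs and the multipliers
of the KKT points accumulate at a direction `d ∈ D_p(x; z)` and a multiplier `(y, z) ∈ M_p(x)` for
which the second-order expansion of the Lagrangian gives `dᵀ ∇²L d ≤ 0`. -/
lemma eventually_kkt_strict
    (hf : ContDiff ℝ 2 fun q : (Fin n → ℝ) × (Fin l → ℝ) => f q.1 q.2)
    (hg : ∀ i : Fin me, ContDiff ℝ 2 fun q : (Fin n → ℝ) × (Fin l → ℝ) => g q.1 q.2 i)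
    (hh : ∀ j : Fin mi, ContDiff ℝ 2 fun q : (Fin n → ℝ) × (Fin l → ℝ) => h q.1 q.2 j)
    {x : Fin n → ℝ} {p : Fin l → ℝ} (hm : MFCQ g h p x) (hgs : GSSOSC f g h p x) :
    ∀ᶠ w : ((Fin n → ℝ) × (Fin n → ℝ)) × (Fin l → ℝ) in 𝓝 ((x, x), p),
      ∀ y z, IsKKT f g h w.2 w.1.1 y z → g w.1.2 w.2 = 0 → h w.1.2 w.2 ≤ 0 →
        w.1.2 ≠ w.1.1 → f w.1.1 w.2 < f w.1.2 w.2 := by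
  by_contra hcon
  rw [Filter.not_eventually] at hcon
  have hne := frequently_iff_neBot.1 hcon
  let 𝒰 := Ultrafilter.of (𝓝 ((x, x), p) ⊓ 𝓟 {w : ((Fin n → ℝ) × (Fin n → ℝ)) × (Fin l → ℝ) |
    ¬ ∀ y z, IsKKT f g h w.2 w.1.1 y z → g w.1.2 w.2 = 0 → h w.1.2 w.2 ≤ 0 →
        w.1.2 ≠ w.1.1 → f w.1.1 w.2 < f w.1.2 w.2})
  have hle := Ultrafilter.of_le (𝓝 ((x, x), p) ⊓
    𝓟 {w : ((Fin n → ℝ) × (Fin n → ℝ)) × (Fin l → ℝ) |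
    ¬ ∀ y z, IsKKT f g h w.2 w.1.1 y z → g w.1.2 w.2 = 0 → h w.1.2 w.2 ≤ 0 →
        w.1.2 ≠ w.1.1 → f w.1.1 w.2 < f w.1.2 w.2})
  have hid : Tendsto id (𝒰 : Filter (((Fin n → ℝ) × (Fin n → ℝ)) × (Fin l → ℝ)))
    (𝓝 ((x, x), p)) := hle.trans inf_le_left
  have hbad : ∀ᶠ w in (𝒰 : Filter (((Fin n → ℝ) × (Fin n → ℝ)) × (Fin l → ℝ))),
      ∃ Λ : (Fin me → ℝ) × (Fin mi → ℝ), IsKKT f g h w.2 w.1.1 Λ.1 Λ.2 ∧ g w.1.2 w.2 = 0 ∧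
        h w.1.2 w.2 ≤ 0 ∧ w.1.2 ≠ w.1.1 ∧ f w.1.2 w.2 ≤ f w.1.1 w.2 := by
    filter_upwards [le_principal_iff.1 (hle.trans inf_le_right)] with w hw
    simp only [not_forall, not_lt] at hw
    obtain ⟨y, z, h1, h2, h3, h4, h5⟩ := hw
    exact ⟨(y, z), h1, h2, h3, h4, h5⟩
  clear_value 𝒰
  have : ∃ Λ : ((Fin n → ℝ) × (Fin n → ℝ)) × (Fin l → ℝ) → (Fin me → ℝ) × (Fin mi → ℝ),
      ∀ᶠ w in (𝒰 : Filter (((Fin n → ℝ) × (Fin n → ℝ)) × (Fin l → ℝ))),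
        IsKKT f g h w.2 w.1.1 (Λ w).1 (Λ w).2 ∧ g w.1.2 w.2 = 0 ∧
        h w.1.2 w.2 ≤ 0 ∧ w.1.2 ≠ w.1.1 ∧ f w.1.2 w.2 ≤ f w.1.1 w.2 := hbad.choice
  obtain ⟨Λ, hΛ⟩ := this
  have hX : Tendsto (fun w : ((Fin n → ℝ) × (Fin n → ℝ)) × (Fin l → ℝ) => w.1.1) 𝒰 (𝓝 x) :=
    (Continuous.tendsto
      (f := fun w : ((Fin n → ℝ) × (Fin n → ℝ)) × (Fin l → ℝ) => w.1.1) (by fun_prop) ((x, x), p)).comp hid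
  have hX' : Tendsto (fun w : ((Fin n → ℝ) × (Fin n → ℝ)) × (Fin l → ℝ) => w.1.2) 𝒰 (𝓝 x) :=
    (Continuous.tendsto
      (f := fun w : ((Fin n → ℝ) × (Fin n → ℝ)) × (Fin l → ℝ) => w.1.2) (by fun_prop) ((x, x), p)).comp hid
  have hQ : Tendsto (fun w : ((Fin n → ℝ) × (Fin n → ℝ)) × (Fin l → ℝ) => w.2) 𝒰 (𝓝 p) :=
    (Continuous.tendsto
      (f := fun w : ((Fin n → ℝ) × (Fin n → ℝ)) × (Fin l → ℝ) => w.2) (by fun_prop) ((x, x), p)).comp hid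
  obtain ⟨⟨y, z⟩, hlim, hk⟩ := exists_multiplier_limit hf hg hh hm hX hQ (hΛ.mono fun w hw => hw.1)
  let t : ((Fin n → ℝ) × (Fin n → ℝ)) × (Fin l → ℝ) → ℝ := fun w => ‖w.1.2 - w.1.1‖
  have ht : ∀ᶠ w in (𝒰 : Filter (((Fin n → ℝ) × (Fin n → ℝ)) × (Fin l → ℝ))), 0 < t w :=
    hΛ.mono fun w hw => norm_pos_iff.2 (sub_ne_zero.2 hw.2.2.2.1)
  have hsph : ∀ᶠ w in (𝒰 : Filter (((Fin n → ℝ) × (Fin n → ℝ)) × (Fin l → ℝ))),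
      (t w)⁻¹ • (w.1.2 - w.1.1) ∈ Metric.sphere (0 : Fin n → ℝ) 1 := by
    filter_upwards [ht] with w hw
    have hw' : ‖w.1.2 - w.1.1‖ ≠ 0 := hw.ne'
    simp [t, norm_smul, hw']
  obtain ⟨d, hd1, hd⟩ := (isCompact_sphere (0 : Fin n → ℝ) 1).ultrafilter_le_nhds'
    (𝒰.map fun w => (t w)⁻¹ • (w.1.2 - w.1.1)) hsph
  have hd' : Tendsto (fun w => (t w)⁻¹ • (w.1.2 - w.1.1)) 𝒰 (𝓝 d) := hd
  have hd0 : d ≠ 0 := by rintro rfl; simp at hd1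
  have hgd : ∀ i, Dx (fun x p => g x p i) (x, p) d = 0 := fun i => by
    have h1 := tendsto_slope_Dx (φ := fun x p => g x p i) (hg i) hX hX' hQ hd'
    refine tendsto_nhds_unique h1 (tendsto_const_nhds.congr' ?_)
    filter_upwards [hΛ] with w hw
    simp [hw.2.1, hw.1.2.1]
  have hfd : Dx f (x, p) d ≤ 0 := by
    refine le_of_tendsto (tendsto_slope_Dx hf hX hX' hQ hd') ?_
    filter_upwards [hΛ, ht] with w hw htw
    exact mul_nonpos_of_nonneg_of_nonpos (inv_nonneg.2 htw.le) (sub_nonpos.2 hw.2.2.2.2)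
  have hhd : ∀ j, 0 < z j → Dx (fun x p => h x p j) (x, p) d ≤ 0 := fun j hj => by
    refine le_of_tendsto (tendsto_slope_Dx (φ := fun x p => h x p j) (hh j) hX hX' hQ hd') ?_
    have hzj : Tendsto (fun w => (Λ w).2 j) 𝒰 (𝓝 (z j)) :=
      (Continuous.tendsto (f := fun v : (Fin me → ℝ) × (Fin mi → ℝ) => v.2 j)
        (by fun_prop) (y, z)).comp hlim
    filter_upwards [hΛ, ht, hzj.eventually (lt_mem_nhds hj)] with w hw htw hzw
    have h0 : h w.1.1 w.2 j = 0 := (mul_eq_zero.1 (hw.1.compl j)).resolve_left hzw.ne'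
    have h1 : h w.1.2 w.2 j ≤ 0 := hw.2.2.1 j
    exact mul_nonpos_of_nonneg_of_nonpos (inv_nonneg.2 htw.le) (by linarith)
  -- By stationarity `∇f d + ∑ zⱼ ∇hⱼ d = 0`, a sum of nonpositive terms.
  have hterm : ∀ j, z j * Dx (fun x p => h x p j) (x, p) d ≤ 0 := fun j => by
    rcases (hk.2.2.2.1 j).lt_or_eq with hj | hj
    · exact mul_nonpos_of_nonneg_of_nonpos (hk.2.2.2.1 j) (hhd j hj)
    · have : z j = 0 := hj.symm
      simp [this]
  have hst := congrArg (fun T : (Fin n → ℝ) →L[ℝ] ℝ => T d) (hk.stationary hf hg hh)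
  simp only [conGrad, _root_.add_apply, _root_.sum_apply, _root_.smul_apply, hgd,
    smul_eq_mul, mul_zero, Finset.sum_const_zero, zero_add, _root_.zero_apply] at hst
  have hsum0 : ∑ j, z j * Dx (fun x p => h x p j) (x, p) d = 0 :=
    le_antisymm (Finset.sum_nonpos fun j _ => hterm j) (by linarith)
  have hdD : d ∈ Dset g h p x z := by
    refine ⟨hgd, fun j _ hj => ?_⟩
    have := (Finset.sum_eq_zero_iff_of_nonpos fun i _ => hterm i).1 hsum0 j (Finset.mem_univ j)
    exact (mul_eq_zero.1 this).resolve_left hj.ne'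
  have hpos := hgs (y, z) hk d hdD hd0
  have htay := tendsto_taylor (contDiff_LagP hf hg hh) hX hX' (hQ.prodMk_nhds hlim) hd'
  have hnon := le_of_tendsto htay (b := 0) (by
    filter_upwards [hΛ] with w hw
    obtain ⟨hkw, hgw, hhw, -, hfw⟩ := hw
    refine mul_nonpos_of_nonneg_of_nonpos (sq_nonneg _) ?_
    have h1 : Dx (LagP f g h) (w.1.1, (w.2, Λ w)) = 0 := hkw.1
    have h2 : LagP f g h w.1.1 (w.2, Λ w) = f w.1.1 w.2 := by
      simp [LagP, Lag, hkw.2.1, hkw.2.2.2.2]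
    have h3 : LagP f g h w.1.2 (w.2, Λ w) ≤ f w.1.2 w.2 := by
      simp only [LagP, Lag, hgw, Pi.zero_apply, mul_zero, Finset.sum_const_zero, add_zero]
      have := Finset.sum_nonpos fun j (_ : j ∈ Finset.univ) =>
        mul_nonpos_of_nonneg_of_nonpos (hkw.2.2.2.1 j) (hhw j)
      linarith
    rw [h1, h2, _root_.zero_apply]
    linarith)
  have hpos' : 0 < fderiv ℝ (fun x' => fderiv ℝ (fun x'' => LagP f g h x'' (p, (y, z))) x' d) x d :=
    hpos
  linarith

/-! ### Existence of local solutions and the stability theorem -/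

/-- If `x` is strictly better than every feasible point on the sphere of radius `r` around it, then
nearby programs have a local solution in the open ball: a minimiser over the closed ball cannot lie
on the sphere, since some feasible point close to `x` does better. -/
lemma eventually_exists_localSol
    (hf : ContDiff ℝ 2 fun q : (Fin n → ℝ) × (Fin l → ℝ) => f q.1 q.2)
    (hg : ∀ i : Fin me, ContDiff ℝ 2 fun q : (Fin n → ℝ) × (Fin l → ℝ) => g q.1 q.2 i)
    (hh : ∀ j : Fin mi, ContDiff ℝ 2 fun q : (Fin n → ℝ) × (Fin l → ℝ) => h q.1 q.2 j)
    {x : Fin n → ℝ} {p : Fin l → ℝ} (hm : MFCQ g h p x) (hgx : g x p = 0) (hhx : h x p ≤ 0)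
    {r : ℝ} (hr : 0 < r)
    (hstrict : ∀ s ∈ Metric.sphere x r, g s p = 0 → h s p ≤ 0 → f x p < f s p) :
    ∀ᶠ p' in 𝓝 p, ∃ x' ∈ Metric.ball x r, IsLocalSol f g h p' x' := by
  have hgc : Continuous fun q : (Fin n → ℝ) × (Fin l → ℝ) => g q.1 q.2 :=
    continuous_pi fun i => (hg i).continuous
  have hhc : Continuous fun q : (Fin n → ℝ) × (Fin l → ℝ) => h q.1 q.2 :=
    continuous_pi fun j => (hh j).continuous
  have hsphere : ∀ᶠ q : (Fin n → ℝ) × (Fin l → ℝ) in 𝓝 (x, p), ∀ s ∈ Metric.sphere x r,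
      g s q.2 = 0 → h s q.2 ≤ 0 → f q.1 q.2 < f s q.2 := by
    refine (isCompact_sphere x r).eventually_forall_of_forall_eventually fun s hs => ?_
    have hc : Continuous fun w : ((Fin n → ℝ) × (Fin l → ℝ)) × (Fin n → ℝ) => (w.2, w.1.2) := by
      fun_prop
    have hc' : Continuous fun w : ((Fin n → ℝ) × (Fin l → ℝ)) × (Fin n → ℝ) => (w.1.1, w.1.2) := by
      fun_prop
    by_cases hgs : g s p = 0
    · by_cases hhs : h s p ≤ 0
      · have h1 := (hf.continuous.comp hc').continuousAt.eventually_lt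
          (hf.continuous.comp hc).continuousAt (x₀ := ((x, p), s)) (hstrict s hs hgs hhs)
        filter_upwards [h1] with w hw _ _ using hw
      · have h1 : ∀ᶠ w : ((Fin n → ℝ) × (Fin l → ℝ)) × (Fin n → ℝ) in 𝓝 ((x, p), s),
            h w.2 w.1.2 ∈ (Iic (0 : Fin mi → ℝ))ᶜ :=
          (hhc.comp hc).continuousAt.eventually (isClosed_Iic.isOpen_compl.mem_nhds hhs)
        filter_upwards [h1] with w hw _ hw2 using absurd hw2 hw
    · have h1 : ∀ᶠ w : ((Fin n → ℝ) × (Fin l → ℝ)) × (Fin n → ℝ) in 𝓝 ((x, p), s),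
            g w.2 w.1.2 ≠ 0 := (hgc.comp hc).continuousAt.eventually_ne hgs
      filter_upwards [h1] with w hw hw2 using absurd hw2 hw
  obtain ⟨N, hN, M, hM, hNM⟩ := mem_nhds_prod_iff.1 hsphere
  filter_upwards [hM, eventually_exists_feasible hg hh hm hgx hhx
    (inter_mem hN (Metric.ball_mem_nhds x hr))] with p' hp' hex
  obtain ⟨a, ⟨haN, har⟩, hga, hha⟩ := hex
  have hsec : Continuous fun x' : Fin n → ℝ => (x', p') := by fun_prop
  have hcomp : IsCompact (Metric.closedBall x r ∩ {x' | g x' p' = 0 ∧ h x' p' ≤ 0}) :=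
    (isCompact_closedBall x r).inter_right
      ((isClosed_eq (hgc.comp hsec) continuous_const).and
        (isClosed_le (hhc.comp hsec) continuous_const))
  obtain ⟨b, ⟨hbr, hgb, hhb⟩, hbmin⟩ := hcomp.exists_isMinOn
    ⟨a, Metric.ball_subset_closedBall har, hga, hha⟩
    (f := fun x' => f x' p') (hf.continuous.comp hsec).continuousOn
  have hmin : ∀ c ∈ Metric.closedBall x r, g c p' = 0 → h c p' ≤ 0 → f b p' ≤ f c p' :=
    fun c h1 h2 h3 => hbmin ⟨h1, h2, h3⟩
  have hball : b ∈ Metric.ball x r := by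
    refine Metric.mem_ball.2 (lt_of_le_of_ne (Metric.mem_closedBall.1 hbr) fun hbs => ?_)
    have h1 := hNM (mk_mem_prod haN hp') b hbs hgb hhb
    exact absurd (hmin a (Metric.ball_subset_closedBall har) hga hha) (not_le.2 h1)
  exact ⟨b, hball, hgb, hhb, _, Metric.isOpen_ball.mem_nhds hball,
    fun c hc => hmin c (Metric.ball_subset_closedBall hc)⟩

end NLP

/-- **Kojima.** Under MFCQ and GSSOSC at a KKT stationary solution
$x^*$ of NLP($p^*$), there are open neighborhoods $U$ of $p^*$ and $V$ of $x^*$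
and a continuous map $x : U → V$ such that $x(p)$ is the unique local solution of
NLP($p$) in $V$ and MFCQ holds at $x(p)$. -/
theorem kojima_strong_stability
    (hf : ContDiff ℝ 2 fun q : (Fin n → ℝ) × (Fin l → ℝ) => f q.1 q.2)
    (hg : ∀ i : Fin me, ContDiff ℝ 2 fun q : (Fin n → ℝ) × (Fin l → ℝ) => g q.1 q.2 i)
    (hh : ∀ j : Fin mi, ContDiff ℝ 2 fun q : (Fin n → ℝ) × (Fin l → ℝ) => h q.1 q.2 j)
    (ps : Fin l → ℝ) (xs : Fin n → ℝ)
    (hstat : (MultSet f g h ps xs).Nonempty)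
    (hmfcq : MFCQ g h ps xs)
    (hgssosc : GSSOSC f g h ps xs) :
    ∃ U : Set (Fin l → ℝ), ∃ V : Set (Fin n → ℝ),
      IsOpen U ∧ IsOpen V ∧ ps ∈ U ∧ xs ∈ V ∧
      ∃ xmap : (Fin l → ℝ) → (Fin n → ℝ),
        ContinuousOn xmap U ∧
        ∀ p' ∈ U,
          xmap p' ∈ V ∧
          IsLocalSol f g h p' (xmap p') ∧
          (∀ x' ∈ V, IsLocalSol f g h p' x' → x' = xmap p') ∧
          MFCQ g h p' (xmap p') := by
  obtain ⟨⟨ys, zs⟩, hks⟩ := hstat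
  have hks : IsKKT f g h ps xs ys zs := hks
  have hpr : Tendsto (fun w : ((Fin n → ℝ) × (Fin n → ℝ)) × (Fin l → ℝ) => (w.1.1, w.2))
      (𝓝 ((xs, xs), ps)) (𝓝 (xs, ps)) :=
    Continuous.tendsto (by fun_prop) ((xs, xs), ps)
  obtain ⟨ε, hε, hball⟩ := Metric.eventually_nhds_iff_ball.1
    ((eventually_kkt_strict hf hg hh hmfcq hgssosc).and
      (hpr.eventually (eventually_mfcq hg hh hmfcq)))
  -- The good ball is open; a smaller closed ball in `x` is needed for compactness.
  let r := ε / 2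
  have hr : 0 < r := half_pos hε
  have hmem : ∀ p ∈ Metric.ball ps ε, ∀ a ∈ Metric.closedBall xs r,
      ∀ b ∈ Metric.closedBall xs r, ((a, b), p) ∈ Metric.ball ((xs, xs), ps) ε := by
    intro p hp a ha b hb
    have ha' : dist a xs < ε := lt_of_le_of_lt ha (half_lt_self hε)
    have hb' : dist b xs < ε := lt_of_le_of_lt hb (half_lt_self hε)
    simp only [Metric.mem_ball, Prod.dist_eq, max_lt_iff]
    exact ⟨⟨ha', hb'⟩, hp⟩
  have hkey : ∀ p ∈ Metric.ball ps ε, ∀ a ∈ Metric.closedBall xs r,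
      ∀ b ∈ Metric.closedBall xs r, ∀ y z, IsKKT f g h p a y z → g b p = 0 → h b p ≤ 0 →
        b ≠ a → f a p < f b p :=
    fun p hp a ha b hb => (hball _ (hmem p hp a ha b hb)).1
  have hmf : ∀ p ∈ Metric.ball ps ε, ∀ a ∈ Metric.closedBall xs r, MFCQ g h p a :=
    fun p hp a ha => (hball _ (hmem p hp a ha a ha)).2
  have huniq : ∀ p ∈ Metric.ball ps ε, ∀ a ∈ Metric.closedBall xs r,
      ∀ b ∈ Metric.closedBall xs r, (∃ y z, IsKKT f g h p a y z) →
        (∃ y z, IsKKT f g h p b y z) → a = b := by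
    rintro p hp a ha b hb ⟨y, z, hka⟩ ⟨y', z', hkb⟩
    by_contra hab
    exact lt_asymm (hkey p hp a ha b hb y z hka hkb.2.1 hkb.2.2.1 (Ne.symm hab))
      (hkey p hp b hb a ha y' z' hkb hka.2.1 hka.2.2.1 hab)
  have hps : ps ∈ Metric.ball ps ε := Metric.mem_ball_self hε
  have hex := eventually_exists_localSol hf hg hh hmfcq hks.2.1 hks.2.2.1 hr fun s hs hgs hhs =>
    hkey ps hps xs (Metric.mem_closedBall_self hr.le) s (Metric.sphere_subset_closedBall hs)
      ys zs hks hgs hhs (Metric.ne_of_mem_sphere hs hr.ne')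
  obtain ⟨U, hU, hUo, hpU⟩ := eventually_nhds_iff.1 (hex.and (Metric.ball_mem_nhds ps hε))
  choose! xmap hxV hxsol using fun p (hp : p ∈ U) => (hU p hp).1
  have hUb : ∀ p ∈ U, p ∈ Metric.ball ps ε := fun p hp => (hU p hp).2
  have hxB : ∀ p ∈ U, xmap p ∈ Metric.closedBall xs r :=
    fun p hp => Metric.ball_subset_closedBall (hxV p hp)
  have hxkkt : ∀ p ∈ U, ∃ y z, IsKKT f g h p (xmap p) y z := fun p hp =>
    (hxsol p hp).exists_kkt hf hg hh (hmf p (hUb p hp) _ (hxB p hp))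
  refine ⟨U, Metric.ball xs r, hUo, Metric.isOpen_ball, hpU, Metric.mem_ball_self hr, xmap, ?_, ?_⟩
  · intro p hp
    refine tendsto_iff_ultrafilter _ _ _ |>.2 fun 𝒰 h𝒰 => ?_
    have hpU' : ∀ᶠ q in (𝒰 : Filter (Fin l → ℝ)), q ∈ U := h𝒰 self_mem_nhdsWithin
    obtain ⟨a, ha, hxa⟩ := (isCompact_closedBall xs r).ultrafilter_le_nhds' (𝒰.map xmap)
      (hpU'.mono hxB)
    have hxa' : Tendsto xmap 𝒰 (𝓝 a) := hxa
    choose! Λy Λz hΛ using hxkkt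
    obtain ⟨w, -, hw⟩ := exists_multiplier_limit hf hg hh (hmf p (hUb p hp) a ha)
      (Q := id) (Λ := fun q => (Λy q, Λz q)) hxa' (h𝒰.trans nhdsWithin_le_nhds) (hpU'.mono hΛ)
    rwa [huniq p (hUb p hp) a ha _ (hxB p hp) ⟨_, _, hw⟩ ⟨_, _, hΛ p hp⟩] at hxa'
  · intro p hp
    refine ⟨hxV p hp, hxsol p hp, fun x' hx' hs' => ?_, hmf p (hUb p hp) _ (hxB p hp)⟩
    have hx'B := Metric.ball_subset_closedBall hx'
    exact huniq p (hUb p hp) x' hx'B _ (hxB p hp)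
      (hs'.exists_kkt hf hg hh (hmf p (hUb p hp) x' hx'B)) (hxkkt p hp)

end SensNLP
end
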